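/- arXiv:math/0208163 — 3 statements merged into one kernel-verified Lean document; each statement's English description precedes it below -/
import Mathlib

section
/- The matrix X' = (X'_{ij}) with X'_{ij} = X_{ij} − q⁻¹X_{1j}X_{in}X_{1n}⁻¹ (2 ≤ i ≤ m, 1 ≤ j ≤ n−1) is a generic q-quantum matrix: the algebra homomorphism O_q(M_{m−1,n−1}) → O_q(M_{m,n})[X_{1n}⁻¹] sending Y_{ij} to X'_{ij} is injective. -/
noncomputable section
open scoped BigOperators

/-- The defining relations of an `m × n` `q`-quantum matrix. -/
def IsQMat {k A : Type*} [Field k] [Ring A] [Algebra k A] (q : k) {m n : ℕ}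
    (X : Fin m → Fin n → A) : Prop :=
  (∀ (i : Fin m) (j l : Fin n), j < l → X i j * X i l = q • (X i l * X i j)) ∧
  (∀ (i r : Fin m) (j : Fin n), i < r → X i j * X r j = q • (X r j * X i j)) ∧
  (∀ (i r : Fin m) (j l : Fin n), i < r → j < l → X i l * X r j = X r j * X i l) ∧
  (∀ (i r : Fin m) (j l : Fin n), i < r → j < l →
    X i j * X r l - X r l * X i j = (q - q⁻¹) • (X i l * X r j))

/-- The relations defining `O_q(M_{m,n})` as a quotient of the free algebra. -/
inductive QMRel (k : Type*) [Field k] (q : k) (m n : ℕ) :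
    FreeAlgebra k (Fin m × Fin n) → FreeAlgebra k (Fin m × Fin n) → Prop
  | row (i : Fin m) (j l : Fin n) (h : j < l) :
      QMRel k q m n (FreeAlgebra.ι k (i, j) * FreeAlgebra.ι k (i, l))
        (q • (FreeAlgebra.ι k (i, l) * FreeAlgebra.ι k (i, j)))
  | col (i r : Fin m) (j : Fin n) (h : i < r) :
      QMRel k q m n (FreeAlgebra.ι k (i, j) * FreeAlgebra.ι k (r, j))
        (q • (FreeAlgebra.ι k (r, j) * FreeAlgebra.ι k (i, j)))
  | anti (i r : Fin m) (j l : Fin n) (h1 : i < r) (h2 : j < l) :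
      QMRel k q m n (FreeAlgebra.ι k (i, l) * FreeAlgebra.ι k (r, j))
        (FreeAlgebra.ι k (r, j) * FreeAlgebra.ι k (i, l))
  | diag (i r : Fin m) (j l : Fin n) (h1 : i < r) (h2 : j < l) :
      QMRel k q m n (FreeAlgebra.ι k (i, j) * FreeAlgebra.ι k (r, l))
        (FreeAlgebra.ι k (r, l) * FreeAlgebra.ι k (i, j) +
          (q - q⁻¹) • (FreeAlgebra.ι k (i, l) * FreeAlgebra.ι k (r, j)))

/-- The quantum matrix algebra `O_q(M_{m,n})`. -/
abbrev OqM (k : Type*) [Field k] (q : k) (m n : ℕ) := RingQuot (QMRel k q m n)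

/-- The canonical generators `X_{ij}` of `O_q(M_{m,n})`. -/
def qX (k : Type*) [Field k] (q : k) (m n : ℕ) (i : Fin m) (j : Fin n) : OqM k q m n :=
  RingQuot.mkAlgHom k (QMRel k q m n) (FreeAlgebra.ι k (i, j))

/-- The number of inversions (the length `ℓ(σ)`) of a permutation of `Fin t`. -/
def invCount {t : ℕ} (σ : Equiv.Perm (Fin t)) : ℕ :=
  Finset.card (Finset.univ.filter (fun p : Fin t × Fin t => p.1 < p.2 ∧ σ p.2 < σ p.1))

/-- The quantum determinant of a `t × t` matrix with entries in an algebra: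
`Σ_σ (-q)^{ℓ(σ)} M_{1,σ(1)} ⋯ M_{t,σ(t)}`. -/
def qdet {k : Type*} [Field k] {A : Type*} [Ring A] [Algebra k A] (q : k) {t : ℕ}
    (M : Fin t → Fin t → A) : A :=
  ∑ σ : Equiv.Perm (Fin t), ((-q) ^ invCount σ) • (List.ofFn (fun i => M i (σ i))).prod

/-- The quantum minor `[I|J]` of the matrix `X` on rows `I` and columns `J`. -/
def qminor {k : Type*} [Field k] {A : Type*} [Ring A] [Algebra k A] (q : k) {m n t : ℕ}
    (X : Fin m → Fin n → A) (I : Finset (Fin m)) (J : Finset (Fin n))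
    (hI : I.card = t) (hJ : J.card = t) : A :=
  qdet q (fun a b => X (I.orderIsoOfFin hI a) (J.orderIsoOfFin hJ b))

/-- The elements `X'_{ij} = X_{ij} - q⁻¹ X_{1j} X_{in} X_{1n}⁻¹` in a localisation of
`O_q(M_{m,n})` at the normal element `X_{1n}`, where `φ` is the localisation map and
`u = X_{1n}⁻¹`. -/
def Xp {k B : Type*} [Field k] [Ring B] [Algebra k B] (q : k) {m n : ℕ}
    (hm : 0 < m) (hn : 0 < n) (φ : OqM k q m n →ₐ[k] B) (u : B)
    (i : Fin m) (j : Fin n) : B :=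
  φ (qX k q m n i j) -
    q⁻¹ • (φ (qX k q m n ⟨0, hm⟩ j) * φ (qX k q m n i ⟨n - 1, by omega⟩) * u)


section helpers
set_option linter.all false
set_option linter.unusedSimpArgs false
set_option linter.unreachableTactic false
set_option linter.unusedTactic false
variable {k : Type*} [Field k] {q : k}

theorem qX_isQMat (m n : ℕ) : IsQMat q (qX k q m n) := by
  refine ⟨?_, ?_, ?_, ?_⟩
  · intro i j l h
    simpa [qX] using RingQuot.mkAlgHom_rel k (QMRel.row (k := k) (q := q) (m := m) (n := n) i j l h)
  · intro i r j h
    simpa [qX] using RingQuot.mkAlgHom_rel k (QMRel.col (k := k) (q := q) (m := m) (n := n) i r j h)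
  · intro i r j l h h'
    simpa [qX] using
      RingQuot.mkAlgHom_rel k (QMRel.anti (k := k) (q := q) (m := m) (n := n) i r j l h h')
  · intro i r j l h h'
    have := RingQuot.mkAlgHom_rel k (QMRel.diag (k := k) (q := q) (m := m) (n := n) i r j l h h')
    rw [sub_eq_iff_eq_add']
    simpa only [qX, map_mul, map_add, map_smul] using this

theorem exists_qlift {A : Type*} [Ring A] [Algebra k A] {m n : ℕ} {X : Fin m → Fin n → A}
    (hX : IsQMat q X) : ∃ F : OqM k q m n →ₐ[k] A, ∀ i j, F (qX k q m n i j) = X i j := by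
  obtain ⟨h1, h2, h3, h4⟩ := hX
  refine ⟨RingQuot.liftAlgHom k ⟨FreeAlgebra.lift k (fun p : Fin m × Fin n => X p.1 p.2), ?_⟩, ?_⟩
  · intro x y h
    induction h with
    | row i j l h => simpa using h1 i j l h
    | col i r j h => simpa using h2 i r j h
    | anti i r j l h h' => simpa using h3 i r j l h h'
    | diag i r j l h h' =>
      have := h4 i r j l h h'
      rw [sub_eq_iff_eq_add'] at this
      simpa only [map_mul, map_add, map_smul, FreeAlgebra.lift_ι_apply] using this
  · intro i j
    simp [qX]

theorem OqM_induction {m n : ℕ} (P : OqM k q m n → Prop) (h1 : P 1)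
    (hadd : ∀ x y, P x → P y → P (x + y)) (hsmul : ∀ (c : k) x, P x → P (c • x))
    (hmul : ∀ i j x, P x → P (qX k q m n i j * x)) (x : OqM k q m n) : P x := by
  obtain ⟨y, rfl⟩ := RingQuot.mkAlgHom_surjective k (QMRel k q m n) x
  have key : ∀ x, P x → P (RingQuot.mkAlgHom k (QMRel k q m n) y * x) := by
    induction y using FreeAlgebra.induction with
    | grade0 r =>
      intro x hx
      rw [AlgHom.commutes, ← Algebra.smul_def]
      exact hsmul _ _ hx
    | grade1 p => intro x hx; exact hmul p.1 p.2 x hx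
    | mul a b ha hb => intro x hx; rw [map_mul, mul_assoc]; exact ha _ (hb _ hx)
    | add a b ha hb => intro x hx; rw [map_add, add_mul]; exact hadd _ _ (ha _ hx) (hb _ hx)
  simpa using key 1 h1

/-- row operator matrices -/
def Lop {A : Type*} [Ring A] [Algebra k A] (q : k) {m n : ℕ} (X : Fin m → Fin n → A)
    (r : Fin m) (l : Fin n) : Module.End k (Fin n → A) where
  toFun v := fun j => (if j = l then q else 1) • (X r l * v j) +
    (if j < l then (q - q⁻¹) else 0) • (X r j * v l)
  map_add' v w := by
    funext j; simp only [Pi.add_apply, mul_add, smul_add]; abel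
  map_smul' c v := by
    funext j
    simp only [Pi.smul_apply, mul_smul_comm, smul_add, RingHom.id_apply]
    congr 1 <;> exact smul_comm _ _ _

theorem Lop_apply {A : Type*} [Ring A] [Algebra k A] (q : k) {m n : ℕ} (X : Fin m → Fin n → A)
    (r : Fin m) (l : Fin n) (v : Fin n → A) (j : Fin n) :
    Lop q X r l v j = (if j = l then q else 1) • (X r l * v j) +
    (if j < l then (q - q⁻¹) else 0) • (X r j * v l) := rfl

theorem Lop_isQMat {A : Type*} [Ring A] [Algebra k A] (hq : q ≠ 0) {m n : ℕ}
    {X : Fin m → Fin n → A} (hX : IsQMat q X) : IsQMat q (Lop q X) := by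
  obtain ⟨h1, h2, h3, h4⟩ := hX
  have g1 : ∀ (i : Fin m) (j l : Fin n) (w : A), j < l →
      X i j * (X i l * w) = q • (X i l * (X i j * w)) := by
    intro i j l w h
    rw [← mul_assoc, h1 i j l h, smul_mul_assoc, mul_assoc]
  have g2 : ∀ (i r : Fin m) (j : Fin n) (w : A), i < r →
      X i j * (X r j * w) = q • (X r j * (X i j * w)) := by
    intro i r j w h
    rw [← mul_assoc, h2 i r j h, smul_mul_assoc, mul_assoc]
  have g3 : ∀ (i r : Fin m) (j l : Fin n) (w : A), i < r → j < l →
      X i l * (X r j * w) = X r j * (X i l * w) := by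
    intro i r j l w h h'
    rw [← mul_assoc, h3 i r j l h h', mul_assoc]
  have g4 : ∀ (i r : Fin m) (j l : Fin n) (w : A), i < r → j < l →
      X i j * (X r l * w) = X r l * (X i j * w) + (q - q⁻¹) • (X r j * (X i l * w)) := by
    intro i r j l w h h'
    have := h4 i r j l h h'
    rw [sub_eq_iff_eq_add'] at this
    rw [← mul_assoc, this, h3 i r j l h h', add_mul, smul_mul_assoc, mul_assoc, mul_assoc]
  refine ⟨?_, ?_, ?_, ?_⟩
  · intro i s l hsl
    refine LinearMap.ext fun v => funext fun j => ?_
    simp only [Module.End.mul_apply, LinearMap.smul_apply, Pi.smul_apply, Lop_apply]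
    rcases lt_trichotomy j s with h | rfl | h
    · have e := h.trans hsl
      simp only [h, hsl, e, h.ne, hsl.ne, e.ne, h.ne', hsl.ne', e.ne', h.not_gt, hsl.not_gt,
        e.not_gt, if_true, if_false, lt_irrefl, zero_smul, add_zero, one_smul, mul_add,
        mul_smul_comm, g1 _ _ _ _ h, g1 _ _ _ _ hsl, g1 _ _ _ _ e]
      try (match_scalars <;> field_simp <;> ring)
    · simp only [hsl, hsl.ne, hsl.ne', hsl.not_gt,
        if_true, if_false, lt_irrefl, zero_smul, add_zero, one_smul, mul_add,
        mul_smul_comm, g1 _ _ _ _ hsl]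
      try (match_scalars <;> field_simp <;> ring)
    · rcases lt_trichotomy j l with e | rfl | e
      · simp only [h, hsl, e, h.ne, hsl.ne, e.ne, h.ne', hsl.ne', e.ne', h.not_gt, hsl.not_gt,
          e.not_gt, if_true, if_false, lt_irrefl, zero_smul, add_zero, one_smul, mul_add,
          mul_smul_comm, g1 _ _ _ _ h, g1 _ _ _ _ hsl, g1 _ _ _ _ e]
        try (match_scalars <;> field_simp <;> ring)
      · simp only [hsl, hsl.ne, hsl.ne', hsl.not_gt,
          if_true, if_false, lt_irrefl, zero_smul, add_zero, one_smul, mul_add,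
          mul_smul_comm, g1 _ _ _ _ hsl]
      · simp only [h, hsl, e, h.ne, hsl.ne, e.ne, h.ne', hsl.ne', e.ne', h.not_gt, hsl.not_gt,
          e.not_gt, if_true, if_false, lt_irrefl, zero_smul, add_zero, one_smul, mul_add,
          mul_smul_comm, g1 _ _ _ _ h, g1 _ _ _ _ hsl, g1 _ _ _ _ e]
  · intro i r l hir
    refine LinearMap.ext fun v => funext fun j => ?_
    simp only [Module.End.mul_apply, LinearMap.smul_apply, Pi.smul_apply, Lop_apply]
    rcases lt_trichotomy j l with h | rfl | h
    · simp only [h, h.ne, h.ne', h.not_gt, 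
        if_true, if_false, lt_irrefl, zero_smul, add_zero, one_smul, mul_add, smul_add,
        mul_smul_comm, g2 _ _ _ _ hir, g3 _ _ _ _ _ hir h, g4 _ _ _ _ _ hir h]
      try (match_scalars <;> field_simp <;> ring)
    · simp only [
        if_true, if_false, lt_irrefl, zero_smul, add_zero, one_smul, mul_add, smul_add,
        mul_smul_comm, g2 _ _ _ _ hir]
    · simp only [h, h.ne, h.ne', h.not_gt, 
        if_true, if_false, lt_irrefl, zero_smul, add_zero, one_smul, mul_add, smul_add,
        mul_smul_comm, g2 _ _ _ _ hir, g3 _ _ _ _ _ hir h, g4 _ _ _ _ _ hir h]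
  · intro i r s l hir hsl
    refine LinearMap.ext fun v => funext fun j => ?_
    simp only [Module.End.mul_apply, Lop_apply]
    rcases lt_trichotomy j s with h | rfl | h
    · have e := h.trans hsl
      simp only [h, hsl, e, h.ne, hsl.ne, e.ne, h.ne', hsl.ne', e.ne', h.not_gt, hsl.not_gt,
        e.not_gt, if_true, if_false, lt_irrefl, zero_smul, add_zero, one_smul, mul_add, smul_add,
        mul_smul_comm, g2 _ _ _ _ hir, g3 _ _ _ _ _ hir h, g3 _ _ _ _ _ hir hsl,
        g3 _ _ _ _ _ hir e, g4 _ _ _ _ _ hir h, g4 _ _ _ _ _ hir hsl, g4 _ _ _ _ _ hir e]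
      try (match_scalars <;> field_simp <;> ring)
    · simp only [hsl, hsl.ne, hsl.ne', hsl.not_gt,
        if_true, if_false, lt_irrefl, zero_smul, add_zero, one_smul, mul_add, smul_add,
        mul_smul_comm, g2 _ _ _ _ hir, g3 _ _ _ _ _ hir hsl, g4 _ _ _ _ _ hir hsl]
      try (match_scalars <;> field_simp <;> ring)
    · rcases lt_trichotomy j l with e | rfl | e
      · simp only [h, hsl, e, h.ne, hsl.ne, e.ne, h.ne', hsl.ne', e.ne', h.not_gt, hsl.not_gt,
          e.not_gt, if_true, if_false, lt_irrefl, zero_smul, add_zero, one_smul, mul_add, smul_add,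
          mul_smul_comm, g2 _ _ _ _ hir, g3 _ _ _ _ _ hir h, g3 _ _ _ _ _ hir hsl,
          g3 _ _ _ _ _ hir e, g4 _ _ _ _ _ hir h, g4 _ _ _ _ _ hir hsl, g4 _ _ _ _ _ hir e]
      · simp only [hsl, hsl.ne, hsl.ne', hsl.not_gt,
          if_true, if_false, lt_irrefl, zero_smul, add_zero, one_smul, mul_add, smul_add,
          mul_smul_comm, g2 _ _ _ _ hir, g3 _ _ _ _ _ hir hsl, g4 _ _ _ _ _ hir hsl]
      · simp only [h, hsl, e, h.ne, hsl.ne, e.ne, h.ne', hsl.ne', e.ne', h.not_gt, hsl.not_gt,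
          e.not_gt, if_true, if_false, lt_irrefl, zero_smul, add_zero, one_smul, mul_add, smul_add,
          mul_smul_comm, g2 _ _ _ _ hir, g3 _ _ _ _ _ hir h, g3 _ _ _ _ _ hir hsl,
          g3 _ _ _ _ _ hir e, g4 _ _ _ _ _ hir h, g4 _ _ _ _ _ hir hsl, g4 _ _ _ _ _ hir e]
  · intro i r s l hir hsl
    refine LinearMap.ext fun v => funext fun j => ?_
    simp only [Module.End.mul_apply, LinearMap.sub_apply, LinearMap.smul_apply, Pi.sub_apply,
      Pi.smul_apply, Lop_apply]
    rcases lt_trichotomy j s with h | rfl | h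
    · have e := h.trans hsl
      simp only [h, hsl, e, h.ne, hsl.ne, e.ne, h.ne', hsl.ne', e.ne', h.not_gt, hsl.not_gt,
        e.not_gt, if_true, if_false, lt_irrefl, zero_smul, add_zero, one_smul, mul_add, smul_add,
        mul_smul_comm, g2 _ _ _ _ hir, g3 _ _ _ _ _ hir h, g3 _ _ _ _ _ hir hsl,
        g3 _ _ _ _ _ hir e, g4 _ _ _ _ _ hir h, g4 _ _ _ _ _ hir hsl, g4 _ _ _ _ _ hir e]
      try (match_scalars <;> field_simp <;> ring)
    · simp only [hsl, hsl.ne, hsl.ne', hsl.not_gt,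
        if_true, if_false, lt_irrefl, zero_smul, add_zero, one_smul, mul_add, smul_add,
        mul_smul_comm, g2 _ _ _ _ hir, g3 _ _ _ _ _ hir hsl, g4 _ _ _ _ _ hir hsl]
      try (match_scalars <;> field_simp <;> ring)
    · rcases lt_trichotomy j l with e | rfl | e
      · simp only [h, hsl, e, h.ne, hsl.ne, e.ne, h.ne', hsl.ne', e.ne', h.not_gt, hsl.not_gt,
          e.not_gt, if_true, if_false, lt_irrefl, zero_smul, add_zero, one_smul, mul_add, smul_add,
          mul_smul_comm, g2 _ _ _ _ hir, g3 _ _ _ _ _ hir h, g3 _ _ _ _ _ hir hsl,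
          g3 _ _ _ _ _ hir e, g4 _ _ _ _ _ hir h, g4 _ _ _ _ _ hir hsl, g4 _ _ _ _ _ hir e]
        try (match_scalars <;> field_simp <;> ring)
      · simp only [hsl, hsl.ne, hsl.ne', hsl.not_gt,
          if_true, if_false, lt_irrefl, zero_smul, add_zero, one_smul, mul_add, smul_add,
          mul_smul_comm, g2 _ _ _ _ hir, g3 _ _ _ _ _ hir hsl, g4 _ _ _ _ _ hir hsl]
        try (match_scalars <;> field_simp <;> ring)
      · simp only [h, hsl, e, h.ne, hsl.ne, e.ne, h.ne', hsl.ne', e.ne', h.not_gt, hsl.not_gt,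
          e.not_gt, if_true, if_false, lt_irrefl, zero_smul, add_zero, one_smul, mul_add, smul_add,
          mul_smul_comm, g2 _ _ _ _ hir, g3 _ _ _ _ _ hir h, g3 _ _ _ _ _ hir hsl,
          g3 _ _ _ _ _ hir e, g4 _ _ _ _ _ hir h, g4 _ _ _ _ _ hir hsl, g4 _ _ _ _ _ hir e]
        try (match_scalars <;> field_simp <;> ring)


theorem exists_rowops (hq : q ≠ 0) (m n : ℕ) :
    ∃ T : Fin (n + 1) → Module.End k (OqM k q m (n + 1)),
      (∀ j r l f, T j (qX k q m (n + 1) r l * f) =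
        (if j = l then q else 1) • (qX k q m (n + 1) r l * T j f) +
        (if j < l then (q - q⁻¹) else 0) • (qX k q m (n + 1) r j * T l f)) ∧
      (∀ j : Fin n, T j.castSucc 1 = 0) ∧ T (Fin.last n) 1 = 1 := by
  obtain ⟨ρ, hρ⟩ := exists_qlift (Lop_isQMat hq (qX_isQMat (k := k) (q := q) m (n + 1)))
  refine ⟨fun j => (LinearMap.proj j).comp ((LinearMap.applyₗ (Pi.single (Fin.last n) 1)).comp
    ρ.toLinearMap), ?_, ?_, ?_⟩
  · intro j r l f
    simp only [LinearMap.comp_apply, LinearMap.proj_apply, LinearMap.applyₗ_apply_apply,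
      AlgHom.toLinearMap_apply, map_mul, hρ, Module.End.mul_apply, Lop_apply]
  · intro j
    simp [(Fin.castSucc_lt_last j).ne]
  · simp

theorem rowops_comm (hq : q ≠ 0) {m n : ℕ}
    (T : Fin (n + 1) → Module.End k (OqM k q m (n + 1)))
    (hT : ∀ j r l f, T j (qX k q m (n + 1) r l * f) =
        (if j = l then q else 1) • (qX k q m (n + 1) r l * T j f) +
        (if j < l then (q - q⁻¹) else 0) • (qX k q m (n + 1) r j * T l f))
    (hT0 : ∀ j : Fin n, T j.castSucc 1 = 0) (hT1 : T (Fin.last n) 1 = 1)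
    (f : OqM k q m (n + 1)) : ∀ j l, j < l → T j (T l f) = q • T l (T j f) := by
  induction f using OqM_induction with
  | h1 =>
    intro j l h
    obtain ⟨j, rfl⟩ : ∃ j' : Fin n, j = j'.castSucc :=
      ⟨j.castPred (h.trans_le (Fin.le_last l)).ne, by simp⟩
    rcases Fin.eq_castSucc_or_eq_last l with ⟨l, rfl⟩ | rfl
    · simp [hT0]
    · simp [hT0, hT1]
  | hadd x y hx hy =>
    intro j l h
    simp [hx j l h, hy j l h]
  | hsmul c x hx =>
    intro j l h
    simp only [map_smul, hx j l h]
    exact smul_comm _ _ _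
  | hmul r s x hx =>
    intro j l hjl
    simp only [hT, map_add, map_smul]
    rcases lt_trichotomy s j with h | rfl | h
    · have e := h.trans hjl
      simp only [h, hjl, e, h.ne, hjl.ne, e.ne, h.ne', hjl.ne', e.ne', h.not_gt, hjl.not_gt,
        e.not_gt, if_true, if_false, lt_irrefl, zero_smul, add_zero, one_smul, mul_add, smul_add,
        mul_smul_comm, hx _ _ hjl]
    · simp only [hjl, hjl.ne, hjl.ne', hjl.not_gt,
        if_true, if_false, lt_irrefl, zero_smul, add_zero, one_smul, mul_add, smul_add,
        mul_smul_comm, hx _ _ hjl]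
    · rcases lt_trichotomy s l with e | rfl | e
      · simp only [h, hjl, e, h.ne, hjl.ne, e.ne, h.ne', hjl.ne', e.ne', h.not_gt, hjl.not_gt,
          e.not_gt, if_true, if_false, lt_irrefl, zero_smul, add_zero, one_smul, mul_add, smul_add,
          mul_smul_comm, hx _ _ hjl, hx _ _ h, hx _ _ e]
        try (match_scalars <;> field_simp <;> ring)
      · simp only [hjl, hjl.ne, hjl.ne', hjl.not_gt,
          if_true, if_false, lt_irrefl, zero_smul, add_zero, one_smul, mul_add, smul_add,
          mul_smul_comm, hx _ _ hjl]
        try (match_scalars <;> field_simp <;> ring)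
      · simp only [h, hjl, e, h.ne, hjl.ne, e.ne, h.ne', hjl.ne', e.ne', h.not_gt, hjl.not_gt,
          e.not_gt, if_true, if_false, lt_irrefl, zero_smul, add_zero, one_smul, mul_add, smul_add,
          mul_smul_comm, hx _ _ hjl, hx _ _ h, hx _ _ e]
        try (match_scalars <;> field_simp <;> ring)

theorem exists_action (hq : q ≠ 0) {m n : ℕ}
    (T : Fin (n + 1) → Module.End k (OqM k q m (n + 1)))
    (hT : ∀ j r l f, T j (qX k q m (n + 1) r l * f) =
        (if j = l then q else 1) • (qX k q m (n + 1) r l * T j f) +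
        (if j < l then (q - q⁻¹) else 0) • (qX k q m (n + 1) r j * T l f))
    (hT0 : ∀ j : Fin n, T j.castSucc 1 = 0) (hT1 : T (Fin.last n) 1 = 1) :
    ∃ Φ : OqM k q (m + 1) (n + 1) →ₐ[k] Module.End k (OqM k q m (n + 1)),
      (∀ j, Φ (qX k q (m + 1) (n + 1) 0 j) = T j) ∧
      (∀ i j f, Φ (qX k q (m + 1) (n + 1) i.succ j) f = qX k q m (n + 1) i j * f) := by
  have hc := rowops_comm hq T hT hT0 hT1
  obtain ⟨h1, h2, h3, h4⟩ := qX_isQMat (k := k) (q := q) m (n + 1)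
  have hQ : IsQMat q (fun (i : Fin (m + 1)) j => Fin.cases (motive := fun _ =>
      Module.End k (OqM k q m (n + 1))) (T j)
      (fun i => LinearMap.mulLeft k (qX k q m (n + 1) i j)) i) := by
    refine ⟨?_, ?_, ?_, ?_⟩
    · intro i j l h
      refine LinearMap.ext fun f => ?_
      cases i using Fin.cases with
      | zero => simpa using hc f j l h
      | succ i => simp [← mul_assoc, h1 i j l h]
    · intro i r j h
      refine LinearMap.ext fun f => ?_
      cases r using Fin.cases with
      | zero => simp at h
      | succ r =>
        cases i using Fin.cases with
        | zero => simp [hT]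
        | succ i => simp [← mul_assoc, h2 i r j (by simpa using h)]
    · intro i r j l h h'
      refine LinearMap.ext fun f => ?_
      cases r using Fin.cases with
      | zero => simp at h
      | succ r =>
        cases i using Fin.cases with
        | zero => simp [hT, h'.ne', h'.not_gt]
        | succ i => simp [← mul_assoc, h3 i r j l (by simpa using h) h']
    · intro i r j l h h'
      refine LinearMap.ext fun f => ?_
      cases r using Fin.cases with
      | zero => simp at h
      | succ r =>
        cases i using Fin.cases with
        | zero => simp [hT, h'.ne', h'.not_gt, h'.ne, h']
        | succ i =>
          simp [← mul_assoc, ← sub_mul, h4 i r j l (by simpa using h) h']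
  obtain ⟨Φ, hΦ⟩ := exists_qlift hQ
  refine ⟨Φ, fun j => ?_, fun i j f => ?_⟩
  · simp [hΦ]
  · simp [hΦ]

theorem exists_iota (q : k) (hq : q ≠ 0) (m n : ℕ) :
    ∃ ι : OqM k q m n →ₐ[k] OqM k q m (n + 1), Function.Injective ι ∧
      ∀ i j, ι (qX k q m n i j) = (q⁻¹ * q⁻¹) • qX k q m (n + 1) i j.castSucc := by
  obtain ⟨h1, h2, h3, h4⟩ := qX_isQMat (k := k) (q := q) m (n + 1)
  obtain ⟨g1, g2, g3, g4⟩ := qX_isQMat (k := k) (q := q) m n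
  have hQ : IsQMat q (fun i (j : Fin n) => (q⁻¹ * q⁻¹) • qX k q m (n + 1) i j.castSucc) := by
    refine ⟨?_, ?_, ?_, ?_⟩
    · intro i j l h
      simp only [smul_mul_assoc, mul_smul_comm, h1 i _ _ (Fin.castSucc_lt_castSucc_iff.2 h)]
      module
    · intro i r j h
      simp only [smul_mul_assoc, mul_smul_comm, h2 i r _ h]
      module
    · intro i r j l h h'
      simp only [smul_mul_assoc, mul_smul_comm, h3 i r _ _ h (Fin.castSucc_lt_castSucc_iff.2 h')]
    · intro i r j l h h'
      have := h4 i r _ _ h (Fin.castSucc_lt_castSucc_iff.2 h')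
      simp only [smul_mul_assoc, mul_smul_comm]
      linear_combination (norm := module) (q⁻¹ * q⁻¹ * (q⁻¹ * q⁻¹)) • this
  have hR : IsQMat q (fun i (j : Fin (n + 1)) => Fin.lastCases (motive := fun _ => OqM k q m n)
      0 (fun j => (q * q) • qX k q m n i j) j) := by
    refine ⟨?_, ?_, ?_, ?_⟩
    · intro i j l h
      cases l using Fin.lastCases with
      | last => simp
      | cast l =>
        cases j using Fin.lastCases with
        | last => simp
        | cast j =>
          simp only [Fin.lastCases_castSucc, smul_mul_assoc, mul_smul_comm, g1 i j l h]
          module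
    · intro i r j h
      cases j using Fin.lastCases with
      | last => simp
      | cast j =>
        simp only [Fin.lastCases_castSucc, smul_mul_assoc, mul_smul_comm, g2 i r j h]
        module
    · intro i r j l h h'
      cases l using Fin.lastCases with
      | last => simp
      | cast l =>
        cases j using Fin.lastCases with
        | last => simp
        | cast j =>
          simp only [Fin.lastCases_castSucc, smul_mul_assoc, mul_smul_comm, g3 i r j l h h']
    · intro i r j l h h'
      cases l using Fin.lastCases with
      | last => simp
      | cast l =>
        cases j using Fin.lastCases with
        | last => exact absurd (h'.trans (Fin.castSucc_lt_last l)) (lt_irrefl _)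
        | cast j =>
          have := g4 i r j l h h'
          simp only [Fin.lastCases_castSucc, smul_mul_assoc, mul_smul_comm]
          linear_combination (norm := module) (q * q * (q * q)) • this
  obtain ⟨ι, hι⟩ := exists_qlift hQ
  obtain ⟨π, hπ⟩ := exists_qlift hR
  refine ⟨ι, ?_, hι⟩
  have : Function.LeftInverse π ι := by
    intro x
    induction x using OqM_induction with
    | h1 => simp
    | hadd x y hx hy => simp [hx, hy]
    | hsmul c x hx => simp [hx]
    | hmul i j x hx =>
      simp only [map_mul, hx, hι, map_smul, hπ, Fin.lastCases_castSucc, smul_smul]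
      have : q⁻¹ * q⁻¹ * (q * q) = 1 := by field_simp
      rw [this, one_smul]
  exact this.injective

theorem core {B : Type*} [Ring B] [Algebra k B] (hq : q ≠ 0) {m n : ℕ}
    (φ : OqM k q (m + 1) (n + 1) →ₐ[k] B) (hφ : Function.Injective φ) (u : B)
    (hu1 : φ (qX k q (m + 1) (n + 1) 0 (Fin.last n)) * u = 1)
    (hu2 : u * φ (qX k q (m + 1) (n + 1) 0 (Fin.last n)) = 1)
    (ψ : OqM k q m n →ₐ[k] B)
    (hψ : ∀ (i : Fin m) (j : Fin n), ψ (qX k q m n i j) =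
      φ (qX k q (m + 1) (n + 1) i.succ j.castSucc) -
        q⁻¹ • (φ (qX k q (m + 1) (n + 1) 0 j.castSucc) *
          φ (qX k q (m + 1) (n + 1) i.succ (Fin.last n)) * u)) :
    Function.Injective ψ := by
  obtain ⟨T, hT, hT0, hT1⟩ := exists_rowops hq m n
  obtain ⟨Φ, hΦ0, hΦ1⟩ := exists_action hq T hT hT0 hT1
  obtain ⟨ι, hι, hιX⟩ := exists_iota q hq m n
  obtain ⟨h1, h2, h3, h4⟩ := qX_isQMat (k := k) (q := q) (m + 1) (n + 1)
  have hk : ∀ y, (∀ j : Fin n, T j.castSucc (ι y) = 0) ∧ T (Fin.last n) (ι y) = ι y := by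
    intro y
    induction y using OqM_induction with
    | h1 => simp [hT0, hT1]
    | hadd x y hx hy => simp [hx, hy]
    | hsmul c x hx => simp [hx]
    | hmul i j x hx =>
      refine ⟨fun l => ?_, ?_⟩
      · simp [hιX, hT, hx.1]
      · simp [hιX, hT, hx.2, (Fin.castSucc_lt_last j).ne', (Fin.castSucc_lt_last j).not_gt]
  set z := qX k q (m + 1) (n + 1) 0 (Fin.last n) with hz
  have hw : ∀ i j, φ z * ψ (qX k q m n i j) =
      φ (qX k q (m + 1) (n + 1) i.succ j.castSucc * z -
        q⁻¹ • (qX k q (m + 1) (n + 1) 0 j.castSucc *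
          qX k q (m + 1) (n + 1) i.succ (Fin.last n))) := by
    intro i j
    have e1 := h1 0 _ _ (Fin.castSucc_lt_last j)
    have e2 := h2 0 i.succ (Fin.last n) (Fin.succ_pos i)
    have e3 := h3 0 i.succ _ _ (Fin.succ_pos i) (Fin.castSucc_lt_last j)
    rw [← hz] at e1 e2 e3
    have e4 : z * (qX k q (m + 1) (n + 1) 0 j.castSucc *
          qX k q (m + 1) (n + 1) i.succ (Fin.last n)) = (qX k q (m + 1) (n + 1) 0 j.castSucc *
          qX k q (m + 1) (n + 1) i.succ (Fin.last n)) * z := by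
      have : z * qX k q (m + 1) (n + 1) 0 j.castSucc =
          q⁻¹ • (qX k q (m + 1) (n + 1) 0 j.castSucc * z) := by
        rw [e1, smul_smul, inv_mul_cancel₀ hq, one_smul]
      rw [← mul_assoc, this, smul_mul_assoc, mul_assoc, e2, mul_smul_comm, smul_smul,
        inv_mul_cancel₀ hq, one_smul, mul_assoc]
    rw [hψ, mul_sub, ← map_mul, e3, mul_smul_comm, ← mul_assoc, ← map_mul, ← map_mul, e4,
      map_mul φ (_ * _) z, mul_assoc _ (φ z) u, hu1, mul_one, map_sub, map_smul]
  have main : ∀ y, ∃ N, ∀ M, N ≤ M → ∃ a, φ z ^ M * ψ y = φ a ∧ Φ a 1 = ι y := by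
    intro y
    induction y using OqM_induction with
    | h1 =>
      refine ⟨0, fun M _ => ⟨z ^ M, by simp, ?_⟩⟩
      rw [map_pow, hΦ0, map_one ι]
      induction M with
      | zero => simp
      | succ M ih => rw [pow_succ, Module.End.mul_apply, hT1, ih (Nat.zero_le _)]
    | hadd x y hx hy =>
      obtain ⟨N, hN⟩ := hx
      obtain ⟨N', hN'⟩ := hy
      refine ⟨max N N', fun M hM => ?_⟩
      obtain ⟨a, ha, ha'⟩ := hN M (le_trans (le_max_left _ _) hM)
      obtain ⟨b, hb, hb'⟩ := hN' M (le_trans (le_max_right _ _) hM)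
      exact ⟨a + b, by simp [mul_add, ha, hb], by simp [ha', hb']⟩
    | hsmul c x hx =>
      obtain ⟨N, hN⟩ := hx
      refine ⟨N, fun M hM => ?_⟩
      obtain ⟨a, ha, ha'⟩ := hN M hM
      exact ⟨c • a, by simp [ha], by simp [ha']⟩
    | hmul i j x hx =>
      obtain ⟨N, hN⟩ := hx
      refine ⟨N + 1, fun M hM => ?_⟩
      obtain ⟨M, rfl⟩ : ∃ M', M = M' + 1 := ⟨M - 1, by omega⟩
      obtain ⟨a, ha, ha'⟩ := hN M (by omega)
      refine ⟨(qX k q (m + 1) (n + 1) i.succ j.castSucc * z -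
        q⁻¹ • (qX k q (m + 1) (n + 1) 0 j.castSucc *
          qX k q (m + 1) (n + 1) i.succ (Fin.last n))) * a, ?_, ?_⟩
      · have hcomm : φ z * ψ (qX k q m n i j) = ψ (qX k q m n i j) * φ z := by
          rw [hw, hψ, sub_mul, smul_mul_assoc, mul_assoc _ u, hu2, mul_one, map_sub, map_smul,
            map_mul, map_mul]
        have hc : Commute (φ z) (ψ (qX k q m n i j)) := hcomm
        rw [map_mul, map_mul, ← hw, ← ha, pow_succ', mul_assoc, mul_assoc,
          ← mul_assoc (φ z ^ M), (hc.pow_left M).eq, mul_assoc]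
      · rw [map_mul, Module.End.mul_apply, ha']
        simp only [map_sub, map_mul, map_smul, LinearMap.sub_apply, LinearMap.smul_apply,
          Module.End.mul_apply, hΦ1, hz, hΦ0, (hk x).2, hT, (hk x).1, hιX,
          Fin.castSucc_lt_last, (Fin.castSucc_lt_last j).ne, if_true, if_false, mul_zero,
          smul_zero, zero_add, smul_mul_assoc]
        match_scalars
        field_simp
        ring
  rw [injective_iff_map_eq_zero]
  intro y hy
  obtain ⟨N, hN⟩ := main y
  obtain ⟨a, ha, ha'⟩ := hN N le_rfl
  rw [hy, mul_zero, eq_comm, map_eq_zero_iff φ hφ] at ha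
  rw [ha, map_zero, LinearMap.zero_apply, eq_comm, map_eq_zero_iff ι hι] at ha'
  exact ha'

end helpers

/-- The matrix `X'` is a *generic* `q`-quantum matrix: any algebra homomorphism
`O_q(M_{m-1,n-1}) → O_q(M_{m,n})[X_{1n}⁻¹]` sending the canonical generators to the
`X'_{ij}` is injective. -/
theorem xprime_is_generic {k B : Type*} [Field k] [Ring B] [Algebra k B]
    (q : k) (hq : q ≠ 0) {m n : ℕ} (hm : 2 ≤ m) (hn : 2 ≤ n)
    (φ : OqM k q m n →ₐ[k] B) (hφ : Function.Injective φ) (u : B)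
    (hu1 : φ (qX k q m n ⟨0, by omega⟩ ⟨n - 1, by omega⟩) * u = 1)
    (hu2 : u * φ (qX k q m n ⟨0, by omega⟩ ⟨n - 1, by omega⟩) = 1)
    (hloc : ∀ b : B, ∃ (a : OqM k q m n) (p : ℕ), b = φ a * u ^ p)
    (ψ : OqM k q (m - 1) (n - 1) →ₐ[k] B)
    (hψ : ∀ (i : Fin (m - 1)) (j : Fin (n - 1)),
      ψ (qX k q (m - 1) (n - 1) i j)
        = Xp q (by omega) (by omega) φ u ⟨(i : ℕ) + 1, by have := i.isLt; omega⟩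
            ⟨(j : ℕ), by have := j.isLt; omega⟩) :
    Function.Injective ψ := by
  obtain ⟨m, rfl⟩ : ∃ m', m = m' + 1 := ⟨m - 1, by omega⟩
  obtain ⟨n, rfl⟩ : ∃ n', n = n' + 1 := ⟨n - 1, by omega⟩
  exact core (m := m) (n := n) hq φ hφ u hu1 hu2 ψ hψ
end
end

section
/- Let p ≥ 2, I = {1 = i₁ < ⋯ < i_p} ⊆ {1,…,m} and J = {j₁ < ⋯ < j_p = n} ⊆ {1,…,n}, and set I' = I∖{1}, J' = J∖{n}. Then in O_q(M_{m,n})[X_{1n}⁻¹], the quantum minor [I'|J']' of the matrix X' satisfies [I'|J']' = (−q)^{1−p}[I|J]X_{1n}⁻¹ = (−q)^{1−p}X_{1n}⁻¹[I|J]. -/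
noncomputable section
open scoped BigOperators

/-! ### Helper lemmas -/

/-- Isolating two adjacent factors of an ordered product. -/
theorem ofFn_prod_split_two {A : Type*} [Monoid A] : ∀ (t : ℕ) (i : ℕ) (hi : i + 1 < t)
    (g : Fin t → A), ∃ L R : A, ∀ f : Fin t → A,
      (∀ j : Fin t, j.val ≠ i → j.val ≠ i + 1 → f j = g j) →
      (List.ofFn f).prod = L * (f ⟨i, by omega⟩ * f ⟨i + 1, hi⟩) * R := by
  intro t
  induction t with
  | zero => intro i hi; omega
  | succ t ih =>
    intro i hi g
    cases i with
    | zero =>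
      obtain ⟨t, rfl⟩ : ∃ s, t = s + 1 := ⟨t - 1, by omega⟩
      refine ⟨1, (List.ofFn (fun j : Fin t => g j.succ.succ)).prod, fun f hf => ?_⟩
      have h : (fun j : Fin t => f j.succ.succ) = fun j : Fin t => g j.succ.succ := by
        funext j
        exact hf _ (by simp) (by simp)
      rw [List.ofFn_succ, List.ofFn_succ, List.prod_cons, List.prod_cons, h, one_mul, mul_assoc]
      rfl
    | succ i =>
      obtain ⟨L, R, h⟩ := ih i (by omega) (fun j => g j.succ)
      refine ⟨g 0 * L, R, fun f hf => ?_⟩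
      rw [List.ofFn_succ, List.prod_cons, h (fun j => f j.succ), hf 0 (by simp) (by simp)]
      · simp only [mul_assoc]; rfl
      · intro j h1 h2
        exact hf _ (by simpa using h1) (by simpa using h2)

/-- Isolating one factor of an ordered product. -/
theorem ofFn_prod_split_one {A : Type*} [Monoid A] : ∀ (t : ℕ) (i : ℕ) (hi : i < t)
    (g : Fin t → A), ∃ L R : A, ∀ f : Fin t → A,
      (∀ j : Fin t, j.val ≠ i → f j = g j) →
      (List.ofFn f).prod = L * f ⟨i, hi⟩ * R := by
  intro t
  induction t with
  | zero => intro i hi; omega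
  | succ t ih =>
    intro i hi g
    cases i with
    | zero =>
      refine ⟨1, (List.ofFn (fun j : Fin t => g j.succ)).prod, fun f hf => ?_⟩
      have h : (fun j : Fin t => f j.succ) = fun j : Fin t => g j.succ := by
        funext j
        exact hf _ (by simp)
      rw [List.ofFn_succ, List.prod_cons, h, one_mul]
      rfl
    | succ i =>
      obtain ⟨L, R, h⟩ := ih i (by omega) (fun j => g j.succ)
      refine ⟨g 0 * L, R, fun f hf => ?_⟩
      rw [List.ofFn_succ, List.prod_cons, h (fun j => f j.succ), hf 0 (by simp)]
      · simp only [mul_assoc]; rfl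
      · intro j h1
        exact hf _ (by simpa using h1)

/-- The length goes up by one under an adjacent transposition. -/
theorem invCount_mul_swap {t : ℕ} (σ : Equiv.Perm (Fin t)) (a b : Fin t)
    (hab : b.val = a.val + 1) (h : σ a < σ b) :
    invCount (σ * Equiv.swap a b) = invCount σ + 1 := by
  unfold invCount
  set s := Equiv.swap a b with hs
  have hsa : s a = b := Equiv.swap_apply_left a b
  have hsb : s b = a := Equiv.swap_apply_right a b
  have hso : ∀ x, x ≠ a → x ≠ b → s x = x := fun x h1 h2 => Equiv.swap_apply_of_ne_of_ne h1 h2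
  have hss : ∀ x, s (s x) = x := fun x => Equiv.swap_apply_self a b x
  have key : ∀ x y, ¬ (x = a ∧ y = b) → x < y → s x < s y := by
    intro x y hxy hlt
    have hv : ∀ z : Fin t, (z.val = a.val ∧ (s z).val = b.val) ∨
        (z.val = b.val ∧ (s z).val = a.val) ∨
        (z.val ≠ a.val ∧ z.val ≠ b.val ∧ (s z).val = z.val) := by
      intro z
      by_cases h1 : z = a
      · left; rw [h1, hsa]; exact ⟨rfl, rfl⟩
      · by_cases h2 : z = b
        · right; left; rw [h2, hsb]; exact ⟨rfl, rfl⟩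
        · right; right
          exact ⟨fun h => h1 (Fin.ext h), fun h => h2 (Fin.ext h), by rw [hso z h1 h2]⟩
    have hx := hv x
    have hy := hv y
    rw [Fin.ext_iff, Fin.ext_iff] at hxy
    rw [Fin.lt_def] at hlt ⊢
    omega
  have hne : (a, b) ∉ (Finset.univ.filter
      (fun p : Fin t × Fin t => p.1 < p.2 ∧ σ p.2 < σ p.1)).map
      (Equiv.prodCongr s s).toEmbedding := by
    simp only [Finset.mem_map, Finset.mem_filter, Finset.mem_univ, true_and]
    rintro ⟨⟨x, y⟩, ⟨hlt, -⟩, he⟩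
    simp only [Equiv.coe_toEmbedding, Equiv.prodCongr_apply, Prod.map, Prod.mk.injEq] at he
    have hx : x = b := by rw [← hss x, he.1, hsa]
    have hy : y = a := by rw [← hss y, he.2, hsb]
    simp only [hx, hy, Fin.lt_def] at hlt
    omega
  rw [← Finset.card_map (f := (Equiv.prodCongr s s).toEmbedding)
    (s := Finset.univ.filter (fun p : Fin t × Fin t => p.1 < p.2 ∧ σ p.2 < σ p.1)),
    ← Finset.card_insert_of_notMem hne]
  congr 1
  ext ⟨x, y⟩
  simp only [Finset.mem_insert, Finset.mem_map, Finset.mem_filter, Finset.mem_univ, true_and,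
    Prod.mk.injEq]
  simp only [Equiv.Perm.mul_apply]
  constructor
  · rintro ⟨h1, h2⟩
    by_cases hxy : x = a ∧ y = b
    · exact Or.inl hxy
    · refine Or.inr ⟨(s x, s y), ⟨key x y hxy h1, h2⟩, ?_⟩
      simp [hss]
  · rintro (⟨rfl, rfl⟩ | ⟨⟨x', y'⟩, ⟨h1, h2⟩, he⟩)
    · refine ⟨by rw [Fin.lt_def]; omega, ?_⟩
      rw [hsa, hsb]; exact h
    · simp only [Equiv.coe_toEmbedding, Equiv.prodCongr_apply, Prod.map, Prod.mk.injEq] at he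
      obtain ⟨rfl, rfl⟩ := he
      simp only [hss]
      refine ⟨key _ _ ?_ h1, h2⟩
      rintro ⟨rfl, rfl⟩
      exact absurd h2 (not_lt.mpr h.le)

section QD
variable {k : Type*} [Field k] {A : Type*} [Ring A] [Algebra k A]

/-- The quantum determinant as a sum over pairs `σ, σ s`. -/
theorem qdet_pair (q : k) {t : ℕ} (M : Fin t → Fin t → A) (a b : Fin t)
    (hab : b.val = a.val + 1) :
    qdet q M = ∑ σ ∈ Finset.univ.filter (fun σ : Equiv.Perm (Fin t) => σ a < σ b),
      ((-q) ^ invCount σ) • ((List.ofFn (fun i => M i (σ i))).prod -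
        q • (List.ofFn (fun i => M i ((σ * Equiv.swap a b) i))).prod) := by
  have hne : a ≠ b := by intro h; rw [h] at hab; omega
  unfold qdet
  rw [← Finset.sum_filter_add_sum_filter_not Finset.univ
    (fun σ : Equiv.Perm (Fin t) => σ a < σ b)]
  have h2 : ∑ σ ∈ Finset.univ.filter (fun σ : Equiv.Perm (Fin t) => ¬ σ a < σ b),
      ((-q) ^ invCount σ) • (List.ofFn (fun i => M i (σ i))).prod =
      ∑ σ ∈ Finset.univ.filter (fun σ : Equiv.Perm (Fin t) => σ a < σ b),
      ((-q) ^ invCount (σ * Equiv.swap a b)) •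
        (List.ofFn (fun i => M i ((σ * Equiv.swap a b) i))).prod := by
    symm
    refine Finset.sum_equiv (Equiv.mulRight (Equiv.swap a b)) ?_ ?_
    · intro σ
      simp only [Finset.mem_filter, Finset.mem_univ, true_and, Equiv.coe_mulRight,
        Equiv.Perm.mul_apply, Equiv.swap_apply_left, Equiv.swap_apply_right, not_lt]
      exact ⟨le_of_lt, fun h => lt_of_le_of_ne h (fun h => hne (σ.injective h))⟩
    · intro σ _
      rfl
  rw [h2, ← Finset.sum_add_distrib]
  refine Finset.sum_congr rfl fun σ hσ => ?_
  rw [invCount_mul_swap σ a b hab (Finset.mem_filter.mp hσ).2, smul_sub, smul_smul, pow_succ,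
    mul_neg, neg_smul, sub_eq_add_neg]

/-- Comparing quantum determinants of matrices which differ in two adjacent rows. -/
theorem qdet_two_rows (q s : k) {t : ℕ} (M N : Fin t → Fin t → A) (a b : Fin t)
    (hab : b.val = a.val + 1)
    (hMN : ∀ i, i ≠ a → i ≠ b → M i = N i)
    (hloc : ∀ j l, j < l → M a j * M b l - q • (M a l * M b j) =
      s • (N a j * N b l - q • (N a l * N b j))) :
    qdet q M = s • qdet q N := by
  rw [qdet_pair q M a b hab, qdet_pair q N a b hab, Finset.smul_sum]
  refine Finset.sum_congr rfl fun σ hσ => ?_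
  have hσ' := (Finset.mem_filter.mp hσ).2
  have ha : (⟨a.val, by omega⟩ : Fin t) = a := rfl
  have hb : (⟨a.val + 1, by omega⟩ : Fin t) = b := by ext; simp [hab]
  obtain ⟨L, R, h⟩ := ofFn_prod_split_two t a.val (by omega) (fun i => M i (σ i))
  have hn : ∀ j : Fin t, j.val ≠ a.val → j.val ≠ a.val + 1 → j ≠ a ∧ j ≠ b := by
    intro j h1 h2
    exact ⟨fun h => h1 (by rw [h]), fun h => h2 (by rw [h, hab])⟩
  have hsw : ∀ j : Fin t, j ≠ a → j ≠ b → (σ * Equiv.swap a b) j = σ j := by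
    intro j h1 h2
    rw [Equiv.Perm.mul_apply, Equiv.swap_apply_of_ne_of_ne h1 h2]
  rw [h (fun i => M i (σ i)) (fun _ _ _ => rfl),
    h (fun i => M i ((σ * Equiv.swap a b) i)) (fun j h1 h2 => by
      simp only [hsw j (hn j h1 h2).1 (hn j h1 h2).2]),
    h (fun i => N i (σ i)) (fun j h1 h2 => by
      simp only [hMN j (hn j h1 h2).1 (hn j h1 h2).2]),
    h (fun i => N i ((σ * Equiv.swap a b) i)) (fun j h1 h2 => by
      simp only [hMN j (hn j h1 h2).1 (hn j h1 h2).2, hsw j (hn j h1 h2).1 (hn j h1 h2).2])]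
  simp only [ha, hb, Equiv.Perm.mul_apply, Equiv.swap_apply_left, Equiv.swap_apply_right]
  have e : ∀ x y : A, L * x * R - q • (L * y * R) = L * (x - q • y) * R := by
    intro x y
    simp only [mul_sub, sub_mul, mul_smul_comm, smul_mul_assoc]
  rw [e, e, hloc _ _ hσ', smul_comm s]
  simp only [mul_smul_comm, smul_mul_assoc]

/-- Additivity of the quantum determinant in one row. -/
theorem qdet_add_row (q : k) {t : ℕ} (M N P : Fin t → Fin t → A) (a : Fin t)
    (hN : ∀ i, i ≠ a → N i = M i) (hP : ∀ i, i ≠ a → P i = M i)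
    (ha : ∀ j, M a j = N a j + P a j) :
    qdet q M = qdet q N + qdet q P := by
  unfold qdet
  rw [← Finset.sum_add_distrib]
  refine Finset.sum_congr rfl fun σ _ => ?_
  obtain ⟨L, R, h⟩ := ofFn_prod_split_one t a.val a.isLt (fun i => M i (σ i))
  have hn : ∀ j : Fin t, j.val ≠ a.val → j ≠ a := fun j h1 h => h1 (by rw [h])
  rw [h (fun i => M i (σ i)) (fun _ _ => rfl),
    h (fun i => N i (σ i)) (fun j h1 => by simp only [hN j (hn j h1)]),
    h (fun i => P i (σ i)) (fun j h1 => by simp only [hP j (hn j h1)]),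
    ← smul_add, ← add_mul, ← mul_add, Fin.eta, ha]

/-- If the rows before row `r` are those of a quantum matrix and row `r` is a right multiple of
row `0`, the quantum determinant vanishes. -/
theorem qdet_repeat (q : k) (hq : q ≠ 0) {t : ℕ} (X : Fin (t + 1) → Fin (t + 1) → A)
    (hX : IsQMat q X) :
    ∀ (r : ℕ) (hr : r + 1 < t + 1) (c : A) (M : Fin (t + 1) → Fin (t + 1) → A),
      (∀ i : Fin (t + 1), i.val ≤ r → M i = X i) →
      (∀ j, M ⟨r + 1, hr⟩ j = X 0 j * c) → qdet q M = 0 := by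
  intro r
  induction r with
  | zero =>
    intro hr c M h1 h2
    rw [qdet_two_rows q 0 M M 0 ⟨0 + 1, hr⟩ (by simp) (fun _ _ _ => rfl), zero_smul]
    intro j l hjl
    rw [h2, h2, h1 0 (by simp), zero_smul, ← mul_assoc, ← mul_assoc, hX.1 0 j l hjl,
      smul_mul_assoc, sub_self]
  | succ r ih =>
    intro hr c M h1 h2
    let a : Fin (t + 1) := ⟨r + 1, by omega⟩
    let b : Fin (t + 1) := ⟨r + 1 + 1, hr⟩
    have hab : a ≠ b := by simp [a, b]
    let N : Fin (t + 1) → Fin (t + 1) → A := fun i =>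
      if i = a then X 0 else if i = b then fun j => X a j * c else M i
    have hNa : N a = X 0 := by simp [N]
    have hNb : N b = fun j => X a j * c := by simp [N, hab.symm]
    have hMa : M a = X a := h1 a le_rfl
    have hMb : ∀ j, M b j = X 0 j * c := h2
    rw [qdet_two_rows q (-q) M N a b rfl, ih (by omega) 1 N, smul_zero]
    · intro i hi
      have hia : i ≠ a := by rintro rfl; simp [a] at hi
      have hib : i ≠ b := by rintro rfl; simp [b] at hi
      simp only [N, hia, hib, if_false]
      exact h1 i (by omega)
    · intro j
      rw [mul_one]
      exact congrFun hNa j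
    · intro i hia hib
      simp only [N, hia, hib, if_false]
    · intro j l hjl
      have h0a : (0 : Fin (t + 1)) < a := by simp [a, Fin.lt_def]
      have e1 := hX.2.2.1 0 a j l h0a hjl
      have e2 : X a l * X 0 j = X 0 j * X a l - (q - q⁻¹) • (X 0 l * X a j) := by
        rw [← hX.2.2.2 0 a j l h0a hjl]; abel
      rw [hNa, hNb, hMa, hMb, hMb]
      simp only [← mul_assoc]
      rw [e2, ← e1]
      simp only [sub_mul, smul_sub, smul_mul_assoc, smul_smul, neg_smul, neg_mul, sub_smul,
        mul_inv_cancel₀ hq, one_smul]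
      abel

/-- Permutation of `Fin (t+1)` sending `0` to the last element. -/
def consPerm {t : ℕ} (τ : Equiv.Perm (Fin t)) : Equiv.Perm (Fin (t + 1)) :=
  Equiv.ofBijective (Fin.cases (Fin.last t) (fun i => (τ i).castSucc) : Fin (t + 1) → Fin (t + 1))
    (Finite.injective_iff_bijective.mp (by
      intro x y
      induction x using Fin.cases <;> induction y using Fin.cases <;>
        simp [(Fin.castSucc_lt_last _).ne, (Fin.castSucc_lt_last _).ne']))

theorem consPerm_zero {t : ℕ} (τ : Equiv.Perm (Fin t)) : consPerm τ 0 = Fin.last t := rfl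

theorem consPerm_succ {t : ℕ} (τ : Equiv.Perm (Fin t)) (i : Fin t) :
    consPerm τ i.succ = (τ i).castSucc := rfl

theorem invCount_consPerm {t : ℕ} (τ : Equiv.Perm (Fin t)) :
    invCount (consPerm τ) = t + invCount τ := by
  unfold invCount
  rw [Finset.card_filter, Finset.card_filter, Fintype.sum_prod_type, Fintype.sum_prod_type,
    Fin.sum_univ_succ]
  congr 1
  · rw [Fin.sum_univ_succ]
    simp [consPerm_zero, consPerm_succ, Fin.castSucc_lt_last]
  · refine Finset.sum_congr rfl fun i _ => ?_
    rw [Fin.sum_univ_succ]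
    simp [consPerm_succ]

/-- Expansion when the last column vanishes below row `0`. -/
theorem qdet_last_col (q : k) {t : ℕ} (N : Fin (t + 1) → Fin (t + 1) → A)
    (h0 : ∀ i : Fin t, N i.succ (Fin.last t) = 0) :
    qdet q N = (-q) ^ t • (N 0 (Fin.last t) * qdet q (fun i j : Fin t => N i.succ j.castSucc)) := by
  unfold qdet
  rw [Finset.mul_sum, Finset.smul_sum]
  symm
  refine Finset.sum_of_injOn consPerm ?_ (fun _ _ => Finset.mem_coe.mpr (Finset.mem_univ _)) ?_ ?_
  · intro τ _ τ' _ h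
    ext i
    have := congrArg (fun σ : Equiv.Perm (Fin (t + 1)) => σ i.succ) h
    simp only [consPerm_succ] at this
    rw [Fin.castSucc_injective t this]
  · intro σ _ hσ
    by_cases hs : σ 0 = Fin.last t
    · exfalso
      apply hσ
      have hl : ∀ i : Fin t, σ i.succ ≠ Fin.last t := by
        intro i h
        rw [← hs] at h
        exact Fin.succ_ne_zero i (σ.injective h)
      let f : Fin t → Fin t := fun i => (σ i.succ).castPred (hl i)
      have hf : Function.Injective f := by
        intro x y h
        exact Fin.succ_injective t (σ.injective (Fin.castPred_inj.mp h))
      refine ⟨Equiv.ofBijective f (Finite.injective_iff_bijective.mp hf), by simp, ?_⟩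
      ext i
      induction i using Fin.cases with
      | zero => rw [consPerm_zero, hs]
      | succ i => rw [consPerm_succ]; simp [f]
    · obtain ⟨i, hi⟩ := σ.surjective (Fin.last t)
      have hi0 : i ≠ 0 := by rintro rfl; exact hs hi
      obtain ⟨i, rfl⟩ := Fin.exists_succ_eq.mpr hi0
      obtain ⟨L, R, h⟩ := ofFn_prod_split_one (t + 1) i.succ.val i.succ.isLt (fun i => N i (σ i))
      rw [h _ (fun _ _ => rfl), Fin.eta, hi, h0]
      simp
  · intro τ _
    rw [invCount_consPerm, List.ofFn_succ, List.prod_cons, pow_add, mul_smul, mul_smul_comm]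
    rfl

/-- The square case. -/
theorem qdet_reduction (q : k) (hq : q ≠ 0) {t : ℕ} (X : Fin (t + 1) → Fin (t + 1) → A)
    (hX : IsQMat q X) (u : A) (h1 : X 0 (Fin.last t) * u = 1) (h2 : u * X 0 (Fin.last t) = 1) 
    (X' : Fin t → Fin t → A)
    (hX' : ∀ i j, X' i j = X i.succ j.castSucc -
      q⁻¹ • (X 0 j.castSucc * X i.succ (Fin.last t) * u)) :
    qdet q X = (-q) ^ t • (X 0 (Fin.last t) * qdet q X') ∧
    Commute u (qdet q X') := by
  let Z : Fin (t + 1) → Fin (t + 1) → A := fun i j =>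
    X i j - q⁻¹ • (X 0 j * X i (Fin.last t) * u)
  let Y : ℕ → Fin (t + 1) → Fin (t + 1) → A := fun r i => if i.val ≤ r then X i else Z i
  have step : ∀ r, qdet q (Y r) = qdet q (Y 0) := by
    intro r
    induction r with
    | zero => rfl
    | succ r ih =>
      rw [← ih]
      by_cases hr : r + 1 < t + 1
      · let a : Fin (t + 1) := ⟨r + 1, hr⟩
        let c : A := q⁻¹ • (X a (Fin.last t) * u)
        let P : Fin (t + 1) → Fin (t + 1) → A := fun i =>
          if i = a then fun j => X 0 j * c else Y (r + 1) i
        rw [qdet_add_row q (Y (r + 1)) (Y r) P a, qdet_repeat q hq X hX r hr c P, add_zero]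
        · intro i hi
          have hia : i ≠ a := by rintro rfl; simp [a] at hi
          have : i.val ≤ r + 1 := by omega
          simp [P, hia, Y, this]
        · intro j
          simp [P, a]
        · intro i hi
          have : i.val ≠ r + 1 := fun h => hi (Fin.ext h)
          have e : i.val ≤ r ↔ i.val ≤ r + 1 := by omega
          simp only [Y, e]
        · intro i hi
          simp only [P, hi, if_false]
        · intro j
          simp [Y, P, a, Z, c, mul_assoc]
      · congr 1
        funext i
        have e1 : i.val ≤ r := by omega
        have e2 : i.val ≤ r + 1 := by omega
        simp only [Y, e1, e2, if_true]
  have hYt : Y t = X := by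
    funext i
    have : i.val ≤ t := by omega
    simp only [Y, this, if_true]
  have hlt : ∀ i : Fin t, (0 : Fin (t + 1)) < i.succ := fun i => Fin.succ_pos i
  have hll : ∀ j : Fin t, j.castSucc < Fin.last t := fun j => Fin.castSucc_lt_last j
  constructor
  · rw [← hYt, step t, qdet_last_col, hYt]
    · have e : (fun i j : Fin t => Y 0 i.succ j.castSucc) = X' := by
        funext i j
        simp [Y, Z, hX']
      have e0 : Y 0 0 = X 0 := by simp [Y]
      rw [e, e0]
    · intro i
      simp only [Y, Z]
      rw [if_neg (by simp), hX.2.1 0 i.succ (Fin.last t) (hlt i), smul_mul_assoc, smul_smul,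
        inv_mul_cancel₀ hq, one_smul, mul_assoc, h1, mul_one, sub_self]
  · have hinv : ∀ x : A, Commute (X 0 (Fin.last t)) x → Commute u x := by
      intro x hx
      have : u * (X 0 (Fin.last t) * x) * u = u * (x * X 0 (Fin.last t)) * u := by rw [hx.eq]
      rw [← mul_assoc, h2, one_mul, mul_assoc, mul_assoc, h1, mul_one] at this
      exact this.symm
    have hc : ∀ i j, Commute u (X' i j) := by
      intro i j
      apply hinv
      rw [hX']
      apply Commute.sub_right
      · exact hX.2.2.1 0 i.succ j.castSucc (Fin.last t) (hlt i) (hll j)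
      · apply Commute.smul_right
        have e1 := hX.1 0 j.castSucc (Fin.last t) (hll j)
        have e2 := hX.2.1 0 i.succ (Fin.last t) (hlt i)
        have e3 : Commute (X 0 (Fin.last t)) (X 0 j.castSucc * X i.succ (Fin.last t)) := by
          change _ * _ = _ * _
          have : q • (X 0 (Fin.last t) * (X 0 j.castSucc * X i.succ (Fin.last t))) =
              q • (X 0 j.castSucc * X i.succ (Fin.last t) * X 0 (Fin.last t)) := by
            rw [← mul_assoc, ← smul_mul_assoc, ← e1, mul_assoc, e2, mul_smul_comm, mul_assoc]
          exact smul_right_injective A hq this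
        exact e3.mul_right (h1.trans h2.symm)
    unfold qdet
    refine Commute.sum_right _ _ _ fun σ _ => Commute.smul_right ?_ _
    refine Commute.list_prod_right _ _ fun x hx => ?_
    obtain ⟨i, rfl⟩ := (List.mem_ofFn' _ _).mp hx
    exact hc _ _

end QD

/-- The canonical generators satisfy the quantum matrix relations. -/
theorem isQMat_qX (k : Type*) [Field k] (q : k) (m n : ℕ) : IsQMat q (qX k q m n) := by
  refine ⟨fun i j l h => ?_, fun i r j h => ?_, fun i r j l h hjl => ?_, fun i r j l h hjl => ?_⟩
  · simpa [qX] using RingQuot.mkAlgHom_rel k (QMRel.row (k := k) (q := q) i j l h)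
  · simpa [qX] using RingQuot.mkAlgHom_rel k (QMRel.col (k := k) (q := q) i r j h)
  · simpa [qX] using RingQuot.mkAlgHom_rel k (QMRel.anti (k := k) (q := q) i r j l h hjl)
  · rw [sub_eq_iff_eq_add']
    simpa only [qX, map_add, map_mul, map_smul] using
      RingQuot.mkAlgHom_rel k (QMRel.diag (k := k) (q := q) i r j l h hjl)

/-- Reduction of quantum minors: for `I` containing row `1` and `J` containing column `n`,
`[I'|J']' = (-q)^{1-p} [I|J] X_{1n}⁻¹ = (-q)^{1-p} X_{1n}⁻¹ [I|J]` in
`O_q(M_{m,n})[X_{1n}⁻¹]`, where `I' = I∖{1}`, `J' = J∖{n}`. -/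
theorem qminor_reduction {k B : Type*} [Field k] [Ring B] [Algebra k B]
    (q : k) (hq : q ≠ 0) {m n : ℕ} (hm : 2 ≤ m) (hn : 2 ≤ n)
    (φ : OqM k q m n →ₐ[k] B) (hφ : Function.Injective φ) (u : B)
    (hu1 : φ (qX k q m n ⟨0, by omega⟩ ⟨n - 1, by omega⟩) * u = 1)
    (hu2 : u * φ (qX k q m n ⟨0, by omega⟩ ⟨n - 1, by omega⟩) = 1)
    (hloc : ∀ b : B, ∃ (a : OqM k q m n) (p : ℕ), b = φ a * u ^ p)
    (p : ℕ) (hp : 2 ≤ p)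
    (I : Finset (Fin m)) (J : Finset (Fin n)) (hIc : I.card = p) (hJc : J.card = p)
    (h1I : (⟨0, by omega⟩ : Fin m) ∈ I) (hnJ : (⟨n - 1, by omega⟩ : Fin n) ∈ J)
    (I' : Finset (Fin (m - 1))) (J' : Finset (Fin (n - 1)))
    (hI' : ∀ a : Fin (m - 1),
      a ∈ I' ↔ (⟨(a : ℕ) + 1, by have := a.isLt; omega⟩ : Fin m) ∈ I)
    (hJ' : ∀ b : Fin (n - 1),
      b ∈ J' ↔ (⟨(b : ℕ), by have := b.isLt; omega⟩ : Fin n) ∈ J)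
    (hI'c : I'.card = p - 1) (hJ'c : J'.card = p - 1) :
    qminor q (fun (a : Fin (m - 1)) (b : Fin (n - 1)) =>
          Xp q (by omega) (by omega) φ u ⟨(a : ℕ) + 1, by have := a.isLt; omega⟩
            ⟨(b : ℕ), by have := b.isLt; omega⟩) I' J' hI'c hJ'c
        = ((-q) ^ ((1 : ℤ) - (p : ℤ))) •
            (qminor q (fun i j => φ (qX k q m n i j)) I J hIc hJc * u) ∧
    qminor q (fun (a : Fin (m - 1)) (b : Fin (n - 1)) =>
          Xp q (by omega) (by omega) φ u ⟨(a : ℕ) + 1, by have := a.isLt; omega⟩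
            ⟨(b : ℕ), by have := b.isLt; omega⟩) I' J' hI'c hJ'c
        = ((-q) ^ ((1 : ℤ) - (p : ℤ))) •
            (u * qminor q (fun i j => φ (qX k q m n i j)) I J hIc hJc) := by
  obtain ⟨t, rfl⟩ : ∃ t, p = t + 1 := ⟨p - 1, by omega⟩
  have hI't : I'.card = t := hI'c
  have hJ't : J'.card = t := hJ'c
  let f : Fin (t + 1) → Fin m := Fin.cases ⟨0, by omega⟩
    (fun i => ⟨(I'.orderEmbOfFin hI't i : ℕ) + 1, by
      have := (I'.orderEmbOfFin hI't i).isLt; omega⟩)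
  have hf : f = I.orderEmbOfFin hIc := by
    apply Finset.orderEmbOfFin_unique
    · intro x
      induction x using Fin.cases with
      | zero => exact h1I
      | succ i => exact (hI' _).mp (Finset.orderEmbOfFin_mem I' hI't i)
    · intro x y hxy
      induction x using Fin.cases with
      | zero =>
        induction y using Fin.cases with
        | zero => exact absurd hxy (lt_irrefl _)
        | succ j => simp [f, Fin.lt_def]
      | succ i =>
        induction y using Fin.cases with
        | zero => exact absurd hxy (by simp)
        | succ j =>
          have := (I'.orderEmbOfFin hI't).strictMono (Fin.succ_lt_succ_iff.mp hxy)
          exact Nat.succ_lt_succ this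
  let g : Fin (t + 1) → Fin n := Fin.lastCases ⟨n - 1, by omega⟩
    (fun i => ⟨(J'.orderEmbOfFin hJ't i : ℕ), by
      have := (J'.orderEmbOfFin hJ't i).isLt; omega⟩)
  have hgl : g (Fin.last t) = ⟨n - 1, by omega⟩ := by simp [g]
  have hgc : ∀ i : Fin t, g i.castSucc = ⟨(J'.orderEmbOfFin hJ't i : ℕ), by
      have := (J'.orderEmbOfFin hJ't i).isLt; omega⟩ := by intro i; simp [g]
  have hg : g = J.orderEmbOfFin hJc := by
    apply Finset.orderEmbOfFin_unique
    · intro x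
      induction x using Fin.lastCases with
      | last => rw [hgl]; exact hnJ
      | cast i => rw [hgc]; exact (hJ' _).mp (Finset.orderEmbOfFin_mem J' hJ't i)
    · intro x y hxy
      induction x using Fin.lastCases with
      | last => exact absurd hxy (not_lt.mpr (Fin.le_last y))
      | cast i =>
        rw [hgc]
        induction y using Fin.lastCases with
        | last =>
          rw [hgl, Fin.lt_def]
          exact (J'.orderEmbOfFin hJ't i).isLt
        | cast j =>
          rw [hgc]
          have := (J'.orderEmbOfFin hJ't).strictMono (Fin.castSucc_lt_castSucc_iff.mp hxy)
          exact this
  have hfm : StrictMono f := by rw [hf]; exact (I.orderEmbOfFin hIc).strictMono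
  have hgm : StrictMono g := by rw [hg]; exact (J.orderEmbOfFin hJc).strictMono
  let X : Fin (t + 1) → Fin (t + 1) → B := fun i j => φ (qX k q m n (f i) (g j))
  obtain ⟨r1, r2, r3, r4⟩ := isQMat_qX k q m n
  have hX : IsQMat q X := by
    refine ⟨fun i j l h => ?_, fun i r j h => ?_, fun i r j l h h' => ?_, fun i r j l h h' => ?_⟩
    · simp only [X, ← map_mul, ← map_smul, r1 _ _ _ (hgm h)]
    · simp only [X, ← map_mul, ← map_smul, r2 _ _ _ (hfm h)]
    · simp only [X, ← map_mul, r3 _ _ _ _ (hfm h) (hgm h')]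
    · simp only [X, ← map_mul, ← map_smul, ← map_sub, r4 _ _ _ _ (hfm h) (hgm h')]
  have hX0 : X 0 (Fin.last t) = φ (qX k q m n ⟨0, by omega⟩ ⟨n - 1, by omega⟩) := by
    simp only [X, hgl]; rfl
  have hmin : qminor q (fun i j => φ (qX k q m n i j)) I J hIc hJc = qdet q X := by
    unfold qminor
    simp only [Finset.coe_orderIsoOfFin_apply, ← hf, ← hg, X]
  rw [hmin]
  have hu1' : X 0 (Fin.last t) * u = 1 := by rw [hX0]; exact hu1
  have hu2' : u * X 0 (Fin.last t) = 1 := by rw [hX0]; exact hu2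
  have hmain := qdet_reduction q hq X hX u hu1' hu2'
    (fun i j : Fin t => Xp q (by omega) (by omega) φ u
      ⟨(I'.orderEmbOfFin hI't i : ℕ) + 1, by
        have := (I'.orderEmbOfFin hI't i).isLt; omega⟩
      ⟨(J'.orderEmbOfFin hJ't j : ℕ), by
        have := (J'.orderEmbOfFin hJ't j).isLt; omega⟩) (by
      intro i j
      simp only [X, hgl, hgc]
      rfl)
  set D := qdet q (fun i j : Fin t => Xp q (by omega) (by omega) φ u
      ⟨(I'.orderEmbOfFin hI't i : ℕ) + 1, by
        have := (I'.orderEmbOfFin hI't i).isLt; omega⟩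
      ⟨(J'.orderEmbOfFin hJ't j : ℕ), by
        have := (J'.orderEmbOfFin hJ't j).isLt; omega⟩) with hD
  obtain ⟨e1, e2⟩ := hmain
  have hs : (-q) ^ ((1 : ℤ) - ((t + 1 : ℕ) : ℤ)) * (-q) ^ t = 1 := by
    have : (1 : ℤ) - ((t + 1 : ℕ) : ℤ) = -(t : ℤ) := by push_cast; ring
    rw [this, zpow_neg, zpow_natCast, inv_mul_cancel₀ (pow_ne_zero _ (neg_ne_zero.mpr hq))]
  have k1 : D = ((-q) ^ ((1 : ℤ) - ((t + 1 : ℕ) : ℤ))) • (qdet q X * u) := by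
    rw [e1, smul_mul_assoc, smul_smul, hs, one_smul, mul_assoc, ← e2.eq, ← mul_assoc, hu1', one_mul]
  have k2 : D = ((-q) ^ ((1 : ℤ) - ((t + 1 : ℕ) : ℤ))) • (u * qdet q X) := by
    rw [e1, mul_smul_comm, smul_smul, hs, one_smul, ← mul_assoc, hu2', one_mul]
  exact ⟨k1, k2⟩
end
end

section
/- For 1 ≤ t ≤ min{m,n}, the two-sided ideal I_t(X) of O_q(M_{m,n}) generated by all t×t quantum minors coincides with the right ideal of O_q(M_{m,n}) generated by the t×t quantum minors. -/
noncomputable section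
open scoped BigOperators

namespace QMinor
variable {k : Type*} [Field k]

def al (q : k) {n : ℕ} (x y : Fin n) : k :=
  if x = y then q - 1 else if x < y then q - q⁻¹ else 0

lemma al_eq (q : k) {n : ℕ} (x : Fin n) : al q x x = q - 1 := by simp [al]
lemma al_lt (q : k) {n : ℕ} {x y : Fin n} (h : x < y) : al q x y = q - q⁻¹ := by
  simp [al, h, h.ne]
lemma al_gt (q : k) {n : ℕ} {x y : Fin n} (h : y < x) : al q x y = 0 := by
  simp [al, h.ne', not_lt.2 h.le]

abbrev sw {N n : ℕ} (a b : Fin N) (I : Fin N → Fin n) : Fin N → Fin n := fun i => I (Equiv.swap a b i)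

def T (q : k) {N n : ℕ} {M : Type*} [AddCommGroup M] [Module k M] (a b : Fin N)
    (f : (Fin N → Fin n) → M) : (Fin N → Fin n) → M :=
  fun I => al q (I a) (I b) • f I + f (sw a b I)

def Alt (q : k) {N n : ℕ} {M : Type*} [AddCommGroup M] [Module k M] (a b : Fin N)
    (f : (Fin N → Fin n) → M) : Prop :=
  (∀ I, I a = I b → f I = 0) ∧ ∀ I, I a < I b → f (sw a b I) = (-q) • f I

section
variable {M : Type*} [AddCommGroup M] [Module k M] {N n : ℕ}

lemma sw_sw (a b : Fin N) (I : Fin N → Fin n) : sw a b (sw a b I) = I := by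
  funext i; simp [sw]

lemma sw_self {a b : Fin N} {I : Fin N → Fin n} (h : I a = I b) : sw a b I = I := by
  funext i; simp only [sw, Equiv.swap_apply_def]; split_ifs with h1 h2 <;> simp_all

lemma T_sub (q : k) (a b : Fin N) (f g : (Fin N → Fin n) → M) :
    T q a b (f - g) = T q a b f - T q a b g := by
  funext I; simp only [T, Pi.sub_apply]; module

lemma T_smul (q : k) (a b : Fin N) (c : k) (f : (Fin N → Fin n) → M) :
    T q a b (c • f) = c • T q a b f := by
  funext I; simp only [T, Pi.smul_apply]; module

lemma T_quad (q : k) (hq : q ≠ 0) (a b : Fin N) (f : (Fin N → Fin n) → M) :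
    T q a b (T q a b f) = (q - q⁻¹) • T q a b f + f := by
  funext I
  simp only [T, sw_sw, Pi.add_apply, Pi.smul_apply]
  simp only [sw, Equiv.swap_apply_left, Equiv.swap_apply_right]
  rcases eq_or_ne (I a) (I b) with h | h
  · rw [sw_self h, h, al_eq]
    match_scalars; field_simp; ring
  · rcases lt_or_gt_of_ne h with h | h <;> simp only [al_lt q h, al_gt q h] <;> module

lemma T_comm (q : k) {a b c d : Fin N} (h1 : a ≠ c) (h2 : a ≠ d) (h3 : b ≠ c) (h4 : b ≠ d)
    (f : (Fin N → Fin n) → M) : T q a b (T q c d f) = T q c d (T q a b f) := by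
  funext I
  have e : sw a b (sw c d I) = sw c d (sw a b I) := by
    funext i
    simp only [sw, Equiv.swap_apply_def]
    congr 1
    split_ifs <;> simp_all
  simp only [T, e]
  simp only [sw, Equiv.swap_apply_of_ne_of_ne h1 h2, Equiv.swap_apply_of_ne_of_ne h3 h4,
    Equiv.swap_apply_of_ne_of_ne h1.symm h3.symm, Equiv.swap_apply_of_ne_of_ne h2.symm h4.symm]
  module

lemma T_braid (q : k) (hq : q ≠ 0) {a b c : Fin N} (h1 : a ≠ b) (h2 : a ≠ c) (h3 : b ≠ c)
    (f : (Fin N → Fin n) → M) :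
    T q a b (T q b c (T q a b f)) = T q b c (T q a b (T q b c f)) := by
  funext I
  have e : sw a b (sw b c (sw a b I)) = sw b c (sw a b (sw b c I)) := by
    funext i
    simp only [sw, Equiv.swap_apply_def]
    congr 1
    split_ifs <;> simp_all
  have t1 : I a = I b → sw a b I = I := sw_self
  have t2 : I b = I c → sw b c I = I := sw_self
  have t3 : I a = I c → sw b c (sw a b I) = sw a b I := fun h => sw_self (by
    simp [sw, Equiv.swap_apply_of_ne_of_ne h2.symm h3.symm, h])
  have t4 : I a = I c → sw a b (sw b c I) = sw b c I := fun h => sw_self (by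
    simp [sw, Equiv.swap_apply_of_ne_of_ne h1 h2, h])
  have t5 : I b = I c → sw a b (sw b c (sw a b I)) = sw b c (sw a b I) := fun h => sw_self (by
    simp [sw, Equiv.swap_apply_of_ne_of_ne h2.symm h3.symm, Equiv.swap_apply_of_ne_of_ne h1 h2, h])
  have t6 : I a = I b → sw a b (sw b c (sw a b I)) = sw a b (sw b c I) := fun h => by
    rw [e]; exact sw_self (by
    simp [sw, Equiv.swap_apply_of_ne_of_ne h2.symm h3.symm, Equiv.swap_apply_of_ne_of_ne h1 h2, h])
  simp only [T, sw_sw]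
  rw [← e]
  have v1 : sw a b I a = I b := by simp [sw]
  have v2 : sw a b I b = I a := by simp [sw]
  have v3 : sw a b I c = I c := by simp [sw, Equiv.swap_apply_of_ne_of_ne h2.symm h3.symm]
  have v4 : sw b c I a = I a := by simp [sw, Equiv.swap_apply_of_ne_of_ne h1 h2]
  have v5 : sw b c I b = I c := by simp [sw]
  have v6 : sw b c I c = I b := by simp [sw]
  have u1 : sw b c (sw a b I) a = I b := by simp [sw, Equiv.swap_apply_of_ne_of_ne h1 h2]
  have u2 : sw b c (sw a b I) b = I c := by
    simp [sw, Equiv.swap_apply_of_ne_of_ne h2.symm h3.symm]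
  have u5 : sw a b (sw b c I) b = I a := by simp [sw, Equiv.swap_apply_of_ne_of_ne h1 h2]
  have u6 : sw a b (sw b c I) c = I b := by
    simp [sw, Equiv.swap_apply_of_ne_of_ne h2.symm h3.symm]
  simp only [v1, v2, v3, v4, v5, v6, u1, u2, u5, u6]
  generalize sw a b (sw b c (sw a b I)) = w6 at *
  generalize sw a b (sw b c I) = w5 at *
  generalize sw b c (sw a b I) = w4 at *
  generalize sw a b I = w3 at *
  generalize sw b c I = w2 at *
  generalize I a = x at *
  generalize I b = y at *
  generalize I c = z at *
  clear e v1 v2 v3 v4 v5 v6 u1 u2 u5 u6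
  rcases lt_trichotomy x y with h | h | h <;> rcases lt_trichotomy y z with h' | h' | h' <;>
    rcases lt_trichotomy x z with h'' | h'' | h'' <;> first
    | (exfalso; omega)
    | skip
  all_goals
    try subst h
    try subst h'
    try subst h''
    try simp only [forall_const] at t1 t2 t3 t4 t5 t6
    simp only [al_eq, al_lt q, al_gt q, *]
    try (match_scalars <;> field_simp <;> ring)

lemma alt_of_T (q : k) (hq : q ≠ 0) {a b : Fin N} (g : (Fin N → Fin n) → M) :
    Alt q a b (T q a b g - q • g) := by
  constructor
  · intro I h
    have := sw_self h
    simp only [T, Pi.sub_apply, Pi.smul_apply, this, h, al_eq]; module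
  · intro I h
    simp only [T, Pi.sub_apply, Pi.smul_apply, sw_sw]
    simp only [sw, Equiv.swap_apply_left, Equiv.swap_apply_right, al_lt q h, al_gt q h]
    match_scalars <;> field_simp <;> ring

lemma T_of_alt (q : k) (hq : q ≠ 0) {a b : Fin N} {f : (Fin N → Fin n) → M} (hf : Alt q a b f) :
    ∃ g, f = T q a b g - q • g := by
  refine ⟨fun I => if I a < I b then (-q) • f I else 0, ?_⟩
  funext I
  simp only [T, Pi.sub_apply, Pi.smul_apply]
  simp only [sw, Equiv.swap_apply_left, Equiv.swap_apply_right]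
  rcases lt_trichotomy (I a) (I b) with h | h | h
  · simp only [h, not_lt.2 h.le, if_true, if_false, al_lt q h]
    match_scalars; field_simp; ring
  · simp [h, hf.1 I h]
  · simp only [h, not_lt.2 h.le, if_true, if_false, al_gt q h]
    have := hf.2 (sw a b I) (by simpa [sw] using h)
    rw [sw_sw] at this
    rw [this]; simp

end

section
variable {A : Type*} [Ring A] [Algebra k A] {m n N : ℕ}

def wd (X : Fin m → Fin n → A) (I : Fin N → Fin m) (J : Fin N → Fin n) : A :=
  (List.ofFn (fun i => X (I i) (J i))).prod

def Z (X : Fin m → Fin n → A) (f : (Fin N → Fin n) → k) (I : Fin N → Fin m) : A :=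
  ∑ J, f J • wd X I J

lemma prod_split {A : Type*} [Ring A] {N : ℕ} (a b : Fin N) (hb : b.val = a.val + 1) :
    ∃ P Q : (Fin N → A) → A, (∀ g, (List.ofFn g).prod = P g * (g a * g b) * Q g) ∧
      ∀ g g', (∀ i, i ≠ a → i ≠ b → g i = g' i) → P g = P g' ∧ Q g = Q g' := by
  refine ⟨fun g => ((List.ofFn g).take a).prod, fun g => ((List.ofFn g).drop (a + 1 + 1)).prod,
    ?_, ?_⟩
  · intro g
    have ha := a.2
    have hb2 := b.2
    conv_lhs => rw [← List.take_append_drop a (List.ofFn g)]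
    rw [List.drop_eq_getElem_cons (by simp), List.drop_eq_getElem_cons (by simp; omega)]
    have hb' : b = ⟨a.val + 1, by omega⟩ := Fin.ext hb
    simp [mul_assoc, hb']
  · intro g g' h
    have hb2 := b.2
    constructor
    · refine congrArg List.prod ?_
      apply List.ext_getElem (by simp)
      intro i h1 h2
      simp at h1
      simp only [List.getElem_take, List.getElem_ofFn]
      apply h <;> (intro e; have := congrArg Fin.val e; simp at this; omega)
    · refine congrArg List.prod ?_
      apply List.ext_getElem (by simp)
      intro i h1 h2
      simp at h1
      simp only [List.getElem_drop, List.getElem_ofFn]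
      apply h <;> (intro e; have := congrArg Fin.val e; simp at this; omega)

lemma wd_local {q : k} (hq : q ≠ 0) {X : Fin m → Fin n → A} (hX : IsQMat q X)
    (a b : Fin N) (hb : b.val = a.val + 1) (I : Fin N → Fin m) (J : Fin N → Fin n) :
    al q (J a) (J b) • wd X I J + wd X I (sw a b J) =
      al q (I a) (I b) • wd X I J + wd X (sw a b I) J := by
  obtain ⟨P, Q, h1, h2⟩ := prod_split (A := A) a b hb
  simp only [wd, h1]
  have e1 := h2 (fun i => X (I i) (sw a b J i)) (fun i => X (I i) (J i)) (by
    intro i h h'; simp [sw, Equiv.swap_apply_of_ne_of_ne h h'])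
  have e2 := h2 (fun i => X (sw a b I i) (J i)) (fun i => X (I i) (J i)) (by
    intro i h h'; simp [sw, Equiv.swap_apply_of_ne_of_ne h h'])
  rw [e1.1, e1.2, e2.1, e2.2]
  generalize P _ = p
  generalize Q _ = r
  simp only [sw, Equiv.swap_apply_left, Equiv.swap_apply_right]
  suffices h : al q (J a) (J b) • (X (I a) (J a) * X (I b) (J b)) + X (I a) (J b) * X (I b) (J a) =
      al q (I a) (I b) • (X (I a) (J a) * X (I b) (J b)) + X (I b) (J a) * X (I a) (J b) by
    have := congrArg (fun x => p * x * r) h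
    simpa [mul_add, add_mul] using this
  generalize I a = x
  generalize I b = y
  generalize J a = z
  generalize J b = w
  obtain ⟨r1, r2, r3, r4⟩ := hX
  have r4' : ∀ (i r : Fin m) (j l : Fin n), i < r → j < l →
    X i j * X r l = X r l * X i j + (q - q⁻¹) • (X i l * X r j) := by
    intro i r j l h h'; rw [← r4 i r j l h h']; abel
  rcases lt_trichotomy x y with h | h | h <;> rcases lt_trichotomy z w with h' | h' | h'
  · rw [al_lt q h, al_lt q h', r3 x y z w h h']
  · subst h'
    rw [al_lt q h, al_eq, r2 x y z h]
    match_scalars <;> field_simp <;> ring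
  · rw [al_lt q h, al_gt q h', r4' x y w z h h']; module
  · subst h
    rw [al_lt q h', al_eq, r1 x z w h']
    match_scalars <;> field_simp <;> ring
  · subst h h'; rw [al_eq, al_eq]
  · subst h
    rw [al_gt q h', al_eq, r1 x w z h']
    match_scalars <;> field_simp <;> ring
  · rw [al_gt q h, al_lt q h', r4' y x z w h h', r3 y x z w h h']; module
  · subst h'
    rw [al_gt q h, al_eq, r2 y x z h]
    match_scalars <;> field_simp <;> ring
  · rw [al_gt q h, al_gt q h', r3 y x w z h h']

def swE (a b : Fin N) : (Fin N → Fin n) ≃ (Fin N → Fin n) :=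
  ⟨sw a b, sw a b, sw_sw a b, sw_sw a b⟩

lemma Z_T {q : k} (hq : q ≠ 0) {X : Fin m → Fin n → A} (hX : IsQMat q X)
    (a b : Fin N) (hb : b.val = a.val + 1) (f : (Fin N → Fin n) → k) :
    Z X (T q a b f) = T q a b (Z X f) := by
  funext I
  simp only [Z, T, add_smul, Finset.sum_add_distrib, Finset.smul_sum]
  have : ∑ J, f (sw a b J) • wd X I J = ∑ J, f J • wd X I (sw a b J) := by
    rw [← Equiv.sum_comp (swE a b)]
    simp only [swE, Equiv.coe_fn_mk, sw_sw]
  rw [this, ← Finset.sum_add_distrib, ← Finset.sum_add_distrib]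
  refine Finset.sum_congr rfl fun J _ => ?_
  have := congrArg (fun x => f J • x) (wd_local hq hX a b hb I J)
  simp only [smul_add, smul_smul] at this
  rw [smul_smul, smul_eq_mul, mul_comm (al q (J a) (J b)), this, mul_comm]

lemma Z_sub (X : Fin m → Fin n → A) (f g : (Fin N → Fin n) → k) :
    Z X (f - g) = Z X f - Z X g := by
  funext I; simp [Z, sub_smul]

lemma Z_smul (X : Fin m → Fin n → A) (c : k) (f : (Fin N → Fin n) → k) :
    Z X (c • f) = c • Z X f := by
  funext I; simp [Z, smul_smul, Finset.smul_sum]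

lemma Z_alt {q : k} (hq : q ≠ 0) {X : Fin m → Fin n → A} (hX : IsQMat q X)
    (a b : Fin N) (hb : b.val = a.val + 1) {f : (Fin N → Fin n) → k} (hf : Alt q a b f) :
    Alt q a b (Z X f) := by
  obtain ⟨g, rfl⟩ := T_of_alt q hq hf
  rw [Z_sub, Z_smul, Z_T hq hX a b hb]
  exact alt_of_T q hq _

end

/-- Adjacent alternation at all positions. -/
def AltAll (q : k) {N n : ℕ} {M : Type*} [AddCommGroup M] [Module k M]
    (f : (Fin N → Fin n) → M) : Prop :=
  ∀ a b : Fin N, b.val = a.val + 1 → Alt q a b f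

section
variable {M : Type*} [AddCommGroup M] [Module k M] {N n : ℕ}

lemma altAll_mem {q : k} {f : (Fin N → Fin n) → M} (hf : AltAll q f) (S : Submodule k M)
    (h : ∀ I, StrictMono I → f I ∈ S) (I : Fin N → Fin n) : f I ∈ S := by
  suffices H : ∀ K : Lex (Fin N → Fin n), f (ofLex K) ∈ S from H (toLex I)
  intro K
  induction K using WellFoundedLT.induction with
  | ind K ih =>
  by_cases hs : StrictMono (ofLex K)
  · exact h _ hs
  · have : ∃ a b : Fin N, b.val = a.val + 1 ∧ ofLex K b ≤ ofLex K a := by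
      by_contra hc
      push Not at hc
      apply hs
      cases N with
      | zero => exact fun a => a.elim0
      | succ N =>
        rw [Fin.strictMono_iff_lt_succ]
        intro i
        exact hc _ _ (by simp)
    obtain ⟨a, b, hab, hle⟩ := this
    rcases hle.eq_or_lt with he | hl
    · rw [(hf a b hab).1 _ he.symm]; exact S.zero_mem
    · have h1 := (hf a b hab).2 (sw a b (ofLex K)) (by simpa [sw] using hl)
      rw [sw_sw] at h1
      rw [h1]
      apply S.smul_mem
      exact ih (toLex (sw a b (ofLex K))) (Pi.lex_desc (by rw [Fin.le_def]; omega) hl)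

lemma inv_swap {t : ℕ} (σ : Equiv.Perm (Fin t)) (a b : Fin t) (hb : b.val = a.val + 1)
    (h : σ a < σ b) : invCount (σ * Equiv.swap a b) = invCount σ + 1 := by
  have key : ∀ x y : Fin t, x < y → (x, y) ≠ (a, b) → Equiv.swap a b x < Equiv.swap a b y := by
    intro x y hxy hne
    have hne' : ¬ (x = a ∧ y = b) := by simpa using hne
    simp only [Fin.ext_iff] at hne'
    simp only [Equiv.swap_apply_def, Fin.ext_iff, Fin.lt_def] at *
    split_ifs <;> omega
  unfold invCount
  have : (Finset.univ.filter (fun p : Fin t × Fin t => p.1 < p.2 ∧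
      (σ * Equiv.swap a b) p.2 < (σ * Equiv.swap a b) p.1)) =
      insert (a, b) ((Finset.univ.filter (fun p : Fin t × Fin t => p.1 < p.2 ∧ σ p.2 < σ p.1)).image
        (Prod.map (Equiv.swap a b) (Equiv.swap a b))) := by
    ext ⟨x, y⟩
    simp only [Finset.mem_filter, Finset.mem_univ, true_and, Finset.mem_insert, Finset.mem_image,
      Prod.exists, Prod.map_apply]
    simp only [Equiv.Perm.mul_apply]
    constructor
    · rintro ⟨h1, h2⟩
      by_cases hne : (x, y) = (a, b)
      · exact Or.inl hne
      · exact Or.inr ⟨_, _, ⟨key x y h1 hne, h2⟩, by simp⟩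
    · rintro (h1 | ⟨x', y', ⟨h1, h2⟩, h3⟩)
      · obtain ⟨rfl, rfl⟩ := Prod.mk.inj h1
        refine ⟨by rw [Fin.lt_def]; omega, by simpa using h⟩
      · obtain ⟨rfl, rfl⟩ := Prod.mk.inj h3
        refine ⟨key _ _ h1 ?_, by simpa using h2⟩
        intro e
        obtain ⟨rfl, rfl⟩ := Prod.mk.inj e
        exact absurd h2 (not_lt.2 h.le)
  rw [this, Finset.card_insert_of_notMem, Finset.card_image_of_injective]
  · exact Function.Injective.prodMap (Equiv.injective _) (Equiv.injective _)
  · simp only [Finset.mem_filter, Finset.mem_univ, true_and, Finset.mem_image,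
      Prod.exists, Prod.map_apply, not_exists, not_and]
    rintro x y ⟨h1, h2⟩ h3
    obtain ⟨h4, h5⟩ := Prod.mk.inj h3
    have hx : x = b := by
      have := congrArg (Equiv.swap a b) h4; simpa using this
    have hy : y = a := by
      have := congrArg (Equiv.swap a b) h5; simpa using this
    subst hx hy
    rw [Fin.lt_def] at h1; omega

/-- the antisymmetriser of a word -/
def asym (q : k) (J : Fin N → Fin n) (K : Fin N → Fin n) : k :=
  ∑ σ : Equiv.Perm (Fin N), if K = (fun i => J (σ i)) then (-q) ^ invCount σ else 0

lemma asym_alt (q : k) {J : Fin N → Fin n} (hJ : StrictMono J) : AltAll q (asym q J) := by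
  intro a b hb
  have hab : a ≠ b := by intro e; subst e; omega
  constructor
  · intro K hK
    refine Finset.sum_eq_zero fun σ _ => ?_
    rw [if_neg]
    rintro rfl
    exact hab (σ.injective (hJ.injective hK))
  · intro K hK
    simp only [asym, smul_eq_mul, Finset.mul_sum]
    rw [← Equiv.sum_comp (Equiv.mulRight (Equiv.swap a b))]
    refine Finset.sum_congr rfl fun σ _ => ?_
    by_cases h : K = fun i => J (σ i)
    · have h' : sw a b K = fun i => J ((Equiv.mulRight (Equiv.swap a b) σ) i) := by
        rw [h]; funext i; simp [sw]
      rw [if_pos h, if_pos h']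
      have : σ a < σ b := by rw [h] at hK; exact hJ.lt_iff_lt.1 hK
      rw [Equiv.coe_mulRight, inv_swap σ a b hb this, pow_succ']
    · rw [if_neg h, if_neg, mul_zero]
      intro h'
      apply h
      rw [← sw_sw a b K, h']
      funext i; simp [sw]

lemma asym_delta (q : k) {J K : Fin N → Fin n} (hJ : StrictMono J) (hK : StrictMono K) :
    asym q J K = if K = J then 1 else 0 := by
  have : ∀ σ : Equiv.Perm (Fin N), K = (fun i => J (σ i)) → σ = 1 := by
    intro σ h
    have hm : StrictMono σ := by
      intro i j hij
      have := hK hij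
      rw [h] at this
      exact hJ.lt_iff_lt.1 this
    have := Subsingleton.elim (hm.orderIsoOfSurjective σ σ.surjective) (OrderIso.refl _)
    ext i
    have := congrArg (fun e => (e i).val) this
    simpa using this
  unfold asym
  rw [Finset.sum_eq_single 1]
  · have : invCount (1 : Equiv.Perm (Fin N)) = 0 := by
      simp only [invCount, Finset.card_eq_zero, Finset.filter_eq_empty_iff]
      rintro ⟨x, y⟩ _ ⟨h1, h2⟩
      exact absurd h1 (not_lt.2 h2.le)
    simp [this]
  · intro σ _ h
    rw [if_neg fun h' => h (this σ h')]
  · simp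

lemma alt_expand (q : k) {w : (Fin N → Fin n) → k} (hw : AltAll q w) :
    w = ∑ J : {J : Fin N → Fin n // StrictMono J}, w J • asym q J.1 := by
  classical
  rw [← sub_eq_zero]
  funext K
  rw [Pi.zero_apply, ← Submodule.mem_bot k]
  refine altAll_mem (q := q) (f := w - _) ?_ ⊥ ?_ K
  · intro a b hb
    constructor
    · intro I hI
      simp only [Pi.sub_apply, Finset.sum_apply, Pi.smul_apply, (hw a b hb).1 I hI]
      simp only [((asym_alt q (Subtype.prop _)) a b hb).1 I hI]
      simp
    · intro I hI
      simp only [Pi.sub_apply, Finset.sum_apply, Pi.smul_apply, (hw a b hb).2 I hI]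
      simp only [((asym_alt q (Subtype.prop _)) a b hb).2 I hI]
      simp only [smul_eq_mul, mul_sub, Finset.mul_sum]
      congr 1
      refine Finset.sum_congr rfl fun _ _ => by ring
  · intro I hI
    rw [Submodule.mem_bot]
    simp only [Pi.sub_apply, Finset.sum_apply, Pi.smul_apply, asym_delta q (Subtype.prop _) hI]
    rw [Finset.sum_eq_single ⟨I, hI⟩]
    · simp
    · intro J _ hJ
      rw [if_neg fun e => hJ (Subtype.ext e.symm)]; simp
    · simp

end

section
variable {M : Type*} [AddCommGroup M] [Module k M] {N n : ℕ}

def TT (q : k) (i : ℕ) (f : (Fin N → Fin n) → M) : (Fin N → Fin n) → M :=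
  if h : i + 1 < N then T q ⟨i, by omega⟩ ⟨i + 1, h⟩ f else f

def VV (q : k) : ℕ → ((Fin N → Fin n) → M) → ((Fin N → Fin n) → M)
  | 0, f => f
  | j + 1, f => TT q j (VV q j f)

lemma TT_lin (q : k) (i : ℕ) (c : k) (f g : (Fin N → Fin n) → M) :
    TT q i (f - c • g) = TT q i f - c • TT q i g := by
  unfold TT; split_ifs
  · rw [T_sub, T_smul]
  · rfl

lemma VV_lin (q : k) (j : ℕ) (c : k) (f g : (Fin N → Fin n) → M) :
    VV q j (f - c • g) = VV q j f - c • VV q j g := by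
  induction j with
  | zero => rfl
  | succ j ih => simp only [VV, ih, TT_lin]

lemma TT_comm (q : k) {i j : ℕ} (h : i + 1 < j) (f : (Fin N → Fin n) → M) :
    TT q i (TT q j f) = TT q j (TT q i f) := by
  unfold TT; split_ifs
  · apply T_comm <;> (rw [Ne, Fin.ext_iff]; simp only []; omega)
  all_goals rfl

lemma VV_comm (q : k) {i j : ℕ} (h : j < i) (f : (Fin N → Fin n) → M) :
    TT q i (VV q j f) = VV q j (TT q i f) := by
  induction j with
  | zero => rfl
  | succ j ih => simp only [VV]; rw [← ih (by omega), TT_comm q h]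

lemma VV_shift (q : k) (hq : q ≠ 0) {i j : ℕ} (h : i + 1 < j) (hj : j < N)
    (f : (Fin N → Fin n) → M) : TT q i (VV q j f) = VV q j (TT q (i + 1) f) := by
  induction j with
  | zero => omega
  | succ j ih =>
    simp only [VV]
    rcases (show i + 1 < j ∨ j = i + 1 by omega) with h' | rfl
    · rw [TT_comm q h', ih h' (by omega)]
    · simp only [VV]
      rw [← VV_comm q (show i < i + 1 by omega)]
      unfold TT
      simp only [dif_pos hj, dif_pos (show i + 1 < N by omega)]
      apply T_braid q hq <;> (rw [Ne, Fin.ext_iff]; simp only []; omega)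

lemma TT_mem {q : k} (hq : q ≠ 0) (S : Submodule k M) (i : ℕ) (f : (Fin N → Fin n) → M)
    (h : ∀ I, TT q i f I ∈ S) : ∀ I, f I ∈ S := by
  unfold TT at h
  split_ifs at h with hi
  · intro I
    have e := congrFun (T_quad q hq ⟨i, by omega⟩ ⟨i + 1, hi⟩ f) I
    rw [Pi.add_apply, ← sub_eq_iff_eq_add'] at e
    rw [← e]
    refine S.sub_mem ?_ (S.smul_mem _ (h I))
    exact S.add_mem (S.smul_mem _ (h _)) (h _)
  · exact h

lemma VV_mem {q : k} (hq : q ≠ 0) (S : Submodule k M) (j : ℕ) (f : (Fin N → Fin n) → M)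
    (h : ∀ I, VV q j f I ∈ S) : ∀ I, f I ∈ S := by
  induction j with
  | zero => exact h
  | succ j ih => exact ih (TT_mem hq S j _ h)

end

section
variable {A : Type*} [Ring A] [Algebra k A] {m n N : ℕ}

lemma Z_VV {q : k} (hq : q ≠ 0) {X : Fin m → Fin n → A} (hX : IsQMat q X)
    (j : ℕ) (f : (Fin N → Fin n) → k) : Z X (VV q j f) = VV q j (Z X f) := by
  induction j with
  | zero => rfl
  | succ j ih =>
    simp only [VV]
    rw [← ih]
    unfold TT
    split_ifs
    · exact Z_T hq hX _ _ rfl _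
    · rfl

lemma Z_asym (q : k) (X : Fin m → Fin n → A) (I : Fin N → Fin m) (J : Fin N → Fin n) :
    Z X (asym q J) I = qdet q (fun a b => X (I a) (J b)) := by
  simp only [Z, asym, qdet, Finset.sum_smul]
  rw [Finset.sum_comm]
  refine Finset.sum_congr rfl fun σ _ => ?_
  rw [Finset.sum_eq_single (fun i => J (σ i))]
  · simp [wd]
  · intro K _ h; simp [h]
  · simp

/-- the set of minors -/
abbrev minors (q : k) (X : Fin m → Fin n → A) (t : ℕ) : Set A :=
  {x | ∃ (I : Finset (Fin m)) (J : Finset (Fin n)) (hI : I.card = t) (hJ : J.card = t),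
            x = qminor q X I J hI hJ}

lemma minor_mem (q : k) (X : Fin m → Fin n → A) {t : ℕ} {I : Fin t → Fin m} {J : Fin t → Fin n}
    (hI : StrictMono I) (hJ : StrictMono J) : Z X (asym q J) I ∈ minors q X t := by
  have cI : (Finset.univ.image I).card = t := by
    rw [Finset.card_image_of_injective _ hI.injective]; simp
  have cJ : (Finset.univ.image J).card = t := by
    rw [Finset.card_image_of_injective _ hJ.injective]; simp
  refine ⟨Finset.univ.image I, Finset.univ.image J, cI, cJ, ?_⟩
  have eI := Finset.orderEmbOfFin_unique cI (f := I) (by simp) hI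
  have eJ := Finset.orderEmbOfFin_unique cJ (f := J) (by simp) hJ
  rw [Z_asym, qminor]
  simp only [Finset.coe_orderIsoOfFin_apply]
  rw [← eI, ← eJ]

lemma Z_mem {q : k} (hq : q ≠ 0) {X : Fin m → Fin n → A} (hX : IsQMat q X) {t : ℕ}
    {w : (Fin t → Fin n) → k} (hw : AltAll q w) (I : Fin t → Fin m) :
    Z X w I ∈ Submodule.span k (minors q X t) := by
  classical
  refine altAll_mem (q := q) (f := Z X w) (fun a b hb => Z_alt hq hX a b hb (hw a b hb)) _ ?_ I
  intro I hI
  have e : Z X w I = ∑ J : {J : Fin t → Fin n // StrictMono J}, w J • Z X (asym q J.1) I := by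
    conv_lhs => rw [alt_expand q hw]
    simp only [Z, Finset.sum_apply, Finset.sum_smul, Finset.smul_sum, Pi.smul_apply]
    rw [Finset.sum_comm]
    simp only [smul_smul, smul_eq_mul]
  rw [e]
  exact Submodule.sum_mem _ fun J _ =>
    Submodule.smul_mem _ _ (Submodule.subset_span (minor_mem q X hI J.2))

lemma Z_cons (X : Fin m → Fin n → A) {t : ℕ} (w : (Fin t → Fin n) → k) (c : Fin n) (r : Fin m)
    (I : Fin t → Fin m) :
    Z X (fun J : Fin (t + 1) → Fin n => if J 0 = c then w (Fin.tail J) else 0) (Fin.cons r I) =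
      X r c * Z X w I := by
  simp only [Z]
  rw [← Equiv.sum_comp (Fin.consEquiv (fun _ => Fin n)), Fintype.sum_prod_type]
  rw [Finset.sum_eq_single c]
  · simp [Fin.consEquiv, wd, Finset.mul_sum, List.ofFn_succ]
  · intro c' _ h
    simp [Fin.consEquiv, h]
  · simp

lemma Z_snoc (X : Fin m → Fin n → A) {t : ℕ} (h : (Fin (t + 1) → Fin n) → k)
    (I : Fin (t + 1) → Fin m) :
    Z X h I = ∑ c, Z X (fun J : Fin t → Fin n => h (Fin.snoc J c)) (Fin.init I) *
      X (I (Fin.last t)) c := by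
  simp only [Z]
  rw [← Equiv.sum_comp (Fin.snocEquiv (fun _ => Fin n)), Fintype.sum_prod_type]
  refine Finset.sum_congr rfl fun c _ => ?_
  rw [Finset.sum_mul]
  refine Finset.sum_congr rfl fun J _ => ?_
  have e : (Fin.snocEquiv (fun _ => Fin n)) (c, J) = (Fin.snoc J c : Fin (t + 1) → Fin n) := rfl
  rw [e, smul_mul_assoc]
  congr 1
  unfold wd
  rw [List.ofFn_succ', List.concat_eq_append, List.prod_append]
  simp [Fin.init]

lemma left_mul_mem {q : k} (hq : q ≠ 0) {X : Fin m → Fin n → A} (hX : IsQMat q X) {t : ℕ}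
    (S : Submodule k A) (hS : ∀ x ∈ minors q X t, ∀ a, x * a ∈ S)
    (r : Fin m) (c : Fin n) (x : A) (hx : x ∈ minors q X t) : X r c * x ∈ S := by
  obtain ⟨I, J, hI, hJ, rfl⟩ := hx
  have e : qminor q X I J hI hJ = Z X (asym q (J.orderEmbOfFin hJ)) (I.orderEmbOfFin hI) := by
    rw [Z_asym, qminor]; simp only [Finset.coe_orderIsoOfFin_apply]
  have hw : AltAll q (asym q (J.orderEmbOfFin hJ)) := asym_alt q (J.orderEmbOfFin hJ).strictMono
  rw [e, ← Z_cons]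
  generalize asym q (J.orderEmbOfFin hJ) = w at hw
  apply VV_mem hq S t
  intro K
  rw [← Z_VV hq hX, Z_snoc]
  refine S.sum_mem fun c' _ => ?_
  have hS' : ∀ y ∈ Submodule.span k (minors q X t), ∀ a, y * a ∈ S := by
    intro y hy a
    induction hy using Submodule.span_induction with
    | mem y hy => exact hS y hy a
    | zero => simp
    | add y z _ _ h1 h2 => rw [add_mul]; exact S.add_mem h1 h2
    | smul d y _ h1 => rw [smul_mul_assoc]; exact S.smul_mem _ h1
  refine hS' _ (Z_mem hq hX ?_ _) _
  intro a b hb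
  have ha2 := a.2
  have hb2 := b.2
  have hF : Alt q a.succ b.succ
      (fun J : Fin (t + 1) → Fin n => if J 0 = c then w (Fin.tail J) else 0) := by
    constructor
    · intro L hL
      simp only []
      rw [(hw a b hb).1 (Fin.tail L) hL, ite_self]
    · intro L hL
      have h0 : sw a.succ b.succ L 0 = L 0 := by
        simp only [sw]
        rw [Equiv.swap_apply_of_ne_of_ne (Fin.succ_ne_zero _).symm (Fin.succ_ne_zero _).symm]
      have h1 : Fin.tail (sw a.succ b.succ L) = sw a b (Fin.tail L) := by
        funext i
        simp only [sw, Fin.tail, Equiv.swap_apply_def, Fin.succ_inj]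
        split_ifs <;> rfl
      simp only []
      rw [h0, h1, (hw a b hb).2 (Fin.tail L) hL]
      split_ifs <;> simp
  have hV : Alt q a.castSucc b.castSucc (VV q t
      (fun J : Fin (t + 1) → Fin n => if J 0 = c then w (Fin.tail J) else 0)) := by
    obtain ⟨g, hg⟩ := T_of_alt q hq hF
    rw [hg, VV_lin]
    have hsh := VV_shift q hq (i := a.val) (j := t) (by omega) (Nat.lt_succ_self t) g
    have e1 : TT q (a.val + 1) g = T q a.succ b.succ g := by
      unfold TT
      rw [dif_pos (by omega)]
      congr 1
      ext; simp [hb]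
    have e2 : TT q a.val (VV q t g) = T q a.castSucc b.castSucc (VV q t g) := by
      unfold TT
      rw [dif_pos (by omega)]
      congr 1
      ext; simp [hb]
    rw [← e1, ← hsh, e2]
    exact alt_of_T q hq _
  constructor
  · intro L hL
    exact hV.1 _ (by simpa using hL)
  · intro L hL
    have := hV.2 (Fin.snoc L c' : Fin (t + 1) → Fin n) (by simpa using hL)
    rw [← this]
    refine congrArg (VV q t _) ?_
    funext i
    refine Fin.lastCases ?_ (fun i => ?_) i
    · simp only [sw, Fin.snoc_last]
      rw [Equiv.swap_apply_of_ne_of_ne (Fin.castSucc_lt_last _).ne' (Fin.castSucc_lt_last _).ne',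
        Fin.snoc_last]
    · have : Equiv.swap a.castSucc b.castSucc i.castSucc = (Equiv.swap a b i).castSucc := by
        simp only [Equiv.swap_apply_def, Fin.castSucc_inj]
        split_ifs <;> rfl
      simp only [sw, this, Fin.snoc_castSucc]

end

lemma qX_isQMat (q : k) (m n : ℕ) : IsQMat q (qX k q m n) := by
  refine ⟨?_, ?_, ?_, ?_⟩
  · intro i j l h
    have := RingQuot.mkAlgHom_rel k (QMRel.row (q := q) i j l h)
    simpa [qX] using this
  · intro i r j h
    have := RingQuot.mkAlgHom_rel k (QMRel.col (q := q) i r j h)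
    simpa [qX] using this
  · intro i r j l h h'
    have := RingQuot.mkAlgHom_rel k (QMRel.anti (q := q) i r j l h h')
    simpa [qX] using this
  · intro i r j l h h'
    have := RingQuot.mkAlgHom_rel k (QMRel.diag (q := q) i r j l h h')
    rw [sub_eq_iff_eq_add']
    simpa only [qX, map_mul, map_add, map_smul] using this

lemma mul_mem_span {q : k} (hq : q ≠ 0) {m n t : ℕ} (a x : OqM k q m n)
    (hx : x ∈ Submodule.span (OqM k q m n)ᵐᵒᵖ (minors q (qX k q m n) t)) :
    a * x ∈ Submodule.span (OqM k q m n)ᵐᵒᵖ (minors q (qX k q m n) t) := by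
  set R := Submodule.span (OqM k q m n)ᵐᵒᵖ (minors q (qX k q m n) t) with hR
  have hright : ∀ y ∈ R, ∀ b, y * b ∈ R := fun y hy b => by
    simpa using R.smul_mem (MulOpposite.op b) hy
  have hsm : ∀ (c : k), ∀ y ∈ R, c • y ∈ R := fun c y hy => by
    rw [Algebra.smul_def, Algebra.commutes]; exact hright _ hy _
  let S : Submodule k (OqM k q m n) :=
    { carrier := R, add_mem' := R.add_mem, zero_mem' := R.zero_mem, smul_mem' := fun c y => hsm c y }
  have hgen : ∀ r c, ∀ y ∈ R, qX k q m n r c * y ∈ R := by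
    intro r c y hy
    induction hy using Submodule.span_induction with
    | mem y hy =>
      exact left_mul_mem hq (qX_isQMat q m n) S
        (fun x hx a => hright x (Submodule.subset_span hx) a) r c y hy
    | zero => simp
    | add y z _ _ h1 h2 => rw [mul_add]; exact R.add_mem h1 h2
    | smul d y _ h1 => rw [mul_smul_comm]; exact R.smul_mem _ h1
  obtain ⟨a, rfl⟩ := RingQuot.mkAlgHom_surjective k (QMRel k q m n) a
  induction a using FreeAlgebra.induction generalizing x with
  | grade0 c => rw [AlgHom.commutes, ← Algebra.smul_def]; exact hsm c x hx
  | grade1 p => exact hgen p.1 p.2 x hx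
  | mul a b h1 h2 => rw [map_mul, mul_assoc]; exact h1 _ (h2 _ hx)
  | add a b h1 h2 => rw [map_add, add_mul]; exact R.add_mem (h1 _ hx) (h2 _ hx)

end QMinor

/-- The two-sided ideal of `O_q(M_{m,n})` generated by the `t × t` quantum minors coincides
with the right ideal they generate. -/
theorem twoSided_eq_right_ideal_of_minors {k : Type*} [Field k]
    (q : k) (hq : q ≠ 0) {m n : ℕ} (t : ℕ) (ht1 : 1 ≤ t) (ht : t ≤ min m n) :
    ∀ a : OqM k q m n,
      a ∈ TwoSidedIdeal.span {x : OqM k q m n |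
          ∃ (I : Finset (Fin m)) (J : Finset (Fin n)) (hI : I.card = t) (hJ : J.card = t),
            x = qminor q (qX k q m n) I J hI hJ} ↔
      a ∈ Submodule.span (OqM k q m n)ᵐᵒᵖ {x : OqM k q m n |
          ∃ (I : Finset (Fin m)) (J : Finset (Fin n)) (hI : I.card = t) (hJ : J.card = t),
            x = qminor q (qX k q m n) I J hI hJ} := by
  intro a
  constructor
  · intro ha
    let R := Submodule.span (OqM k q m n)ᵐᵒᵖ (QMinor.minors q (qX k q m n) t)
    let I : TwoSidedIdeal (OqM k q m n) := TwoSidedIdeal.mk' (R : Set (OqM k q m n)) R.zero_mem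
      (fun h1 h2 => R.add_mem h1 h2) (fun h => R.neg_mem h)
      (fun {x y} h => QMinor.mul_mem_span hq x y h)
      (fun {x y} h => by simpa using R.smul_mem (MulOpposite.op y) h)
    have hI : ∀ x, x ∈ I ↔ x ∈ R := fun x => TwoSidedIdeal.mem_mk' _ _ _ _ _ _ _
    rw [TwoSidedIdeal.mem_span_iff] at ha
    exact (hI a).1 (ha I fun x hx => (hI x).2 (Submodule.subset_span hx))
  · intro ha
    induction ha using Submodule.span_induction with
    | mem y hy => exact TwoSidedIdeal.subset_span hy
    | zero => exact TwoSidedIdeal.zero_mem _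
    | add y z _ _ h1 h2 => exact TwoSidedIdeal.add_mem _ h1 h2
    | smul d y _ h1 => exact TwoSidedIdeal.mul_mem_right _ _ _ h1
end
end
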